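/- Let K be an algebraically closed field (of arbitrary characteristic) and n, m positive integers. The ring of matrix invariants S(n,m) = K[Mat_{n,n}^m]^{GL_n} is generated as a K-algebra by the functions (X_1,...,X_m) ↦ σ_s(X_{i_1} X_{i_2} ⋯ X_{i_k}) over all s ≥ 0, k ≥ 1, and indices i_1,...,i_k ∈ {1,...,m}, where σ_s(A) denotes the s-th characteristic coefficient of the n×n matrix A, defined by det(t·I_n − A) = Σ_{j} σ_j(A)·t^j. -/

import Mathlib

open MvPolynomial Matrix

/-- Coordinate functions of an `m`-tuple of `n × n` matrices. -/
def matCoords {K : Type} [Field K] {n m : ℕ} (X : Fin m → Matrix (Fin n) (Fin n) K) :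
    Fin m × Fin n × Fin n → K :=
  fun p => X p.1 p.2.1 p.2.2

/-- The ring of matrix semi-invariants `R(n,m) = K[Mat_{n,n}^m]^{SL_n × SL_n}`, where
`(A,B)` acts by `(X_1, …, X_m) ↦ (A X_1 B⁻¹, …, A X_m B⁻¹)`. -/
noncomputable def matrixSemiInvariants (K : Type) [Field K] (n m : ℕ) :
    Subalgebra K (MvPolynomial (Fin m × Fin n × Fin n) K) :=
  ⨅ (A : SpecialLinearGroup (Fin n) K) (B : SpecialLinearGroup (Fin n) K)
    (X : Fin m → Matrix (Fin n) (Fin n) K),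
      AlgHom.equalizer
        (aeval (matCoords fun i => A.val * X i * (B⁻¹).val))
        (aeval (matCoords X))

/-- The ring of matrix invariants `S(n,m) = K[Mat_{n,n}^m]^{GL_n}`, where `A` acts by
simultaneous conjugation. -/
noncomputable def matrixInvariants (K : Type) [Field K] (n m : ℕ) :
    Subalgebra K (MvPolynomial (Fin m × Fin n × Fin n) K) :=
  ⨅ (A : GeneralLinearGroup (Fin n) K) (X : Fin m → Matrix (Fin n) (Fin n) K),
      AlgHom.equalizer
        (aeval (matCoords fun i => A.val * X i * (A⁻¹).val))
        (aeval (matCoords X))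

/-! A homogeneous conjugation invariant `f` of degree `d` yields the function
`F (X₀, …, Xₘ) = f (adj X₀ * X₁, …, adj X₀ * Xₘ)`, which satisfies
`F (Aᵀ X B) = (det A * det B) ^ d * F X` and returns `f` at `X₀ = 1`. Such semi-invariants `F` are
linear combinations of the coefficients of the polynomials `det (∑ uₖ vₖᵀ ⊗ Xᵢ)` in the entries of
the auxiliary vectors `uₖ`, `vₖ`, a separate family for each `i`. At `X₀ = 1`, Amitsur's theorem on
the characteristic polynomial of a sum expresses these coefficients by characteristic coefficients
of words in `X₁, …, Xₘ`.

The spanning statement is proved by comparing leading monomials, which works in every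
characteristic. After the substitution `Xᵢ = Pᵢᵀ Qᵢ`, invariance under unipotent matrices forces the
exponents of a leading monomial to form a pair of tables that satisfy ballot inequalities, and
diagonal matrices force their row sums to agree. Each table determines a filling of a diagram as in
the theory of pictures of Zelevinsky, and this filling is the only one that contributes the leading
monomial to the coefficient of the determinant which it selects. So every such pair of tables
already occurs as the leading exponent of a coefficient of the determinant.
-/

namespace ShearInvariance

section Translation

open Polynomial hiding X C
open Polynomial renaming X → pX, C → pC

variable {R : Type*} [CommRing R]

/-- The extension to `R[x]` of a substitution `τ : R →+* R[t]` by `x ↦ x + t`. In the target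
`R[X][X]` the outer variable is the parameter `t`, the inner one is `x`. -/
noncomputable def translateExt (τ : R →+* R[X]) : R[X] →+* R[X][X] :=
  eval₂RingHom ((mapRingHom pC).comp τ) (pX + pC pX)

variable (τ : R →+* R[X]) (g : R[X])

lemma translateExt_X : translateExt τ pX = pX + pC pX := by simp [translateExt]

lemma eval₂_neg_translateExt :
    eval₂RingHom (eval₂RingHom pC (-pX)) pX (translateExt τ g) = τ (g.coeff 0) := by
  have hX : (eval₂RingHom (eval₂RingHom pC (-pX)) pX : R[X][X] →+* R[X]) (pX + pC pX) = 0 := by simp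
  have hC : (eval₂RingHom (eval₂RingHom pC (-pX)) pX : R[X][X] →+* R[X]).comp (mapRingHom pC) =
      RingHom.id _ := by ext <;> simp
  rw [translateExt, coe_eval₂RingHom _ (pX + pC pX), Polynomial.hom_eval₂, hX, eval₂_at_zero,
    ← RingHom.comp_assoc, hC, RingHom.id_comp]

lemma natDegree_coeff_translateExt_le (k : ℕ) :
    ((translateExt τ g).coeff k).natDegree ≤ g.natDegree := by
  rw [translateExt, coe_eval₂RingHom, eval₂_eq_sum_range, finsetSum_coeff]
  refine natDegree_sum_le_of_forall_le _ _ fun j hj ↦ ?_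
  rw [Polynomial.coeff_mul]
  refine natDegree_sum_le_of_forall_le _ _ fun p _ ↦ natDegree_mul_le.trans ?_
  have hpow : (((pX + pC pX : R[X][X]) ^ j).coeff p.2).natDegree ≤ j := by
    rw [coeff_X_add_C_pow]
    refine natDegree_mul_le.trans ?_
    have := natDegree_X_pow_le (R := R) (j - p.2)
    simp only [natDegree_natCast, add_zero]
    omega
  have := Finset.mem_range.1 hj
  simp only [RingHom.comp_apply, coe_mapRingHom, Polynomial.coeff_map, natDegree_C, zero_add]
  omega

lemma natDegree_coeff_zero_le :
    (τ (g.coeff 0)).natDegree ≤ g.natDegree + (translateExt τ g).natDegree := by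
  rw [← eval₂_neg_translateExt, coe_eval₂RingHom, eval₂_eq_sum_range]
  refine natDegree_sum_le_of_forall_le _ _ fun j hj ↦ natDegree_mul_le.trans ?_
  have hcoeff : (((translateExt τ g).coeff j).comp (-pX)).natDegree ≤ g.natDegree :=
    natDegree_comp_le.trans <| (Nat.mul_le_mul_left _ (by simpa using natDegree_X_le)).trans <| by
      simpa using natDegree_coeff_translateExt_le τ g j
  have := natDegree_X_pow_le (R := R) j
  have := Finset.mem_range.1 hj
  change (((translateExt τ g).coeff j).comp (-pX)).natDegree + _ ≤ _
  omega

lemma translateExt_ne_zero {τ : R →+* R[X]} {g : R[X]} (h : τ (g.coeff 0) ≠ 0) :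
    translateExt τ g ≠ 0 := fun h0 ↦ h <| by
  rw [← eval₂_neg_translateExt, h0, map_zero]

lemma natDegree_translateExt_X_pow_mul {τ : R →+* R[X]} {g : R[X]} (h : τ (g.coeff 0) ≠ 0)
    (r : ℕ) : (translateExt τ (pX ^ r * g)).natDegree = r + (translateExt τ g).natDegree := by
  have := (Polynomial.nontrivial_iff (R := R)).1 (nontrivial_of_ne _ _ h)
  have hmonic : (pX + pC pX : R[X][X]).Monic := monic_X_add_C _
  rw [map_mul, map_pow, translateExt_X,
    (hmonic.pow r).natDegree_mul' (translateExt_ne_zero h), hmonic.natDegree_pow,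
    natDegree_X_add_C, mul_one]

end Translation

/-- The simultaneous translation `x i ↦ x i + t` of all variables, with `t` the variable of the
univariate polynomial ring. -/
noncomputable def translate (K : Type*) [CommRing K] (σ : Type*) :
    MvPolynomial σ K →ₐ[K] Polynomial (MvPolynomial σ K) :=
  aeval fun i ↦ Polynomial.C (X i) + Polynomial.X

section

variable {K : Type*} [CommRing K]

lemma eval_translate {σ : Type*} (t : K) (h : MvPolynomial σ K) :
    (translate K σ h).eval (C t) = aeval (fun i ↦ X i + C t) h := by
  have : ((Polynomial.aeval (C t : MvPolynomial σ K)).restrictScalars K).comp (translate K σ)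
      = aeval fun i ↦ X i + C t := by
    ext i; simp [translate]
  simpa [Polynomial.aeval_def] using DFunLike.congr_fun this h

lemma translate_ne_zero {σ : Type*} {h : MvPolynomial σ K} (hh : h ≠ 0) :
    translate K σ h ≠ 0 := fun h0 ↦ hh <| by
  simpa [h0, aeval_X_left] using (eval_translate 0 h).symm

lemma map_translate_finSuccEquiv {q : ℕ} (h : MvPolynomial (Fin (q + 1)) K) :
    (translate K (Fin (q + 1)) h).map (finSuccEquiv K q : _ →+* _) =
      translateExt (translate K (Fin q)).toRingHom (finSuccEquiv K q h) := by
  induction h using MvPolynomial.induction_on with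
  | C a => simp [translate, translateExt, finSuccEquiv_apply, algebraMap_eq,
      Polynomial.algebraMap_apply]
  | add p q hp hq => rw [map_add, Polynomial.map_add, hp, hq, map_add, map_add]
  | mul_X p i hp =>
    rw [map_mul, Polynomial.map_mul, hp, map_mul, map_mul]
    congr 1
    refine Fin.cases ?_ (fun j ↦ ?_) i
    · simp [translate, translateExt, finSuccEquiv_X_zero, add_comm]
    · simp [translate, translateExt, finSuccEquiv_X_succ]

lemma exists_finSuccEquiv_eq_X_pow_mul {q : ℕ} {h : MvPolynomial (Fin (q + 1)) K}
    {e : Fin (q + 1) →₀ ℕ} (hmin : ∀ e' ∈ h.support, e 0 ≤ e' 0) :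
    ∃ g, finSuccEquiv K q h = Polynomial.X ^ e 0 * g := by
  refine (Polynomial.X_pow_dvd_iff (n := e 0)).2 fun k hk ↦ ?_
  by_contra hne
  obtain ⟨m, hm⟩ := support_nonempty.2 hne
  have := hmin _ (mem_support_coeff_finSuccEquiv.1 hm)
  rw [Finsupp.cons_zero] at this
  omega

lemma natDegree_finSuccEquiv_le {q N : ℕ} {h : MvPolynomial (Fin (q + 1)) K}
    (hN : ∀ e ∈ h.support, e 0 ≤ N) : (finSuccEquiv K q h).natDegree ≤ N := by
  rw [natDegree_finSuccEquiv, degreeOf_le_iff]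
  exact hN

lemma coeff_finSuccEquiv_ne_zero {q : ℕ} {h : MvPolynomial (Fin (q + 1)) K}
    {e : Fin (q + 1) →₀ ℕ} (he : e ∈ h.support) : (finSuccEquiv K q h).coeff (e 0) ≠ 0 :=
  support_nonempty.1 ⟨e.tail, by rwa [mem_support_coeff_finSuccEquiv, Finsupp.cons_tail]⟩

lemma natDegree_translate_coeff_finSuccEquiv [IsDomain K] {q c N : ℕ}
    {h : MvPolynomial (Fin (q + 1)) K} {e : Fin (q + 1) →₀ ℕ}
    (hc : (translate K _ h).natDegree ≤ c) (hN : ∀ e' ∈ h.support, e' 0 ≤ N)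
    (he : e ∈ h.support) (hmin : ∀ e' ∈ h.support, e 0 ≤ e' 0) :
    e 0 ≤ c ∧
      (translate K _ ((finSuccEquiv K q h).coeff (e 0))).natDegree + 2 * e 0 ≤ c + N := by
  have hne := coeff_finSuccEquiv_ne_zero he
  have hdeg := natDegree_finSuccEquiv_le hN
  have hmap : (translateExt (translate K (Fin q)).toRingHom (finSuccEquiv K q h)).natDegree ≤ c :=
    map_translate_finSuccEquiv h ▸ Polynomial.natDegree_map_le.trans hc
  obtain ⟨g, hg⟩ := exists_finSuccEquiv_eq_X_pow_mul hmin
  have hcoeff : (finSuccEquiv K q h).coeff (e 0) = g.coeff 0 := by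
    simp [hg, Polynomial.coeff_X_pow_mul']
  rw [hcoeff] at hne ⊢
  have hg0 : g ≠ 0 := by rintro rfl; simp at hne
  have hτ : (translate K (Fin q)).toRingHom (g.coeff 0) ≠ 0 :=
    translate_ne_zero hne
  rw [hg, Polynomial.natDegree_X_pow_mul _ hg0] at hdeg
  rw [hg, natDegree_translateExt_X_pow_mul hτ] at hmap
  have hbound := natDegree_coeff_zero_le (translate K (Fin q)).toRingHom g
  change (translate K (Fin q) (g.coeff 0)).natDegree ≤ _ at hbound
  omega

end

lemma sum_Iic_succ {q : ℕ} (f : Fin (q + 1) → ℕ) (j : Fin q) :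
    ∑ i ∈ Finset.Iic j.succ, f i = f 0 + ∑ i ∈ Finset.Iic j, f i.succ := by
  simp only [← Finset.filter_ge_eq_Iic, Finset.sum_filter, Fin.sum_univ_succ,
    Fin.succ_le_succ_iff, Fin.zero_le, if_true]

lemma sum_Iio_succ {q : ℕ} (f : Fin (q + 1) → ℕ) (j : Fin q) :
    ∑ i ∈ Finset.Iio j.succ, f i = f 0 + ∑ i ∈ Finset.Iio j, f i.succ := by
  simp only [← Finset.filter_gt_eq_Iio, Finset.sum_filter, Fin.sum_univ_succ,
    Fin.succ_lt_succ_iff, Fin.succ_pos, if_true]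

lemma sum_Iic_add_sum_Iio_le {K : Type*} [CommRing K] [IsDomain K] {q c : ℕ}
    {h : MvPolynomial (Fin q) K} {N : Fin q → ℕ} {e : Fin q →₀ ℕ}
    (hc : (translate K _ h).natDegree ≤ c) (hN : ∀ e' ∈ h.support, ∀ i, e' i ≤ N i)
    (he : e ∈ h.support)
    (hmin : ∀ e' ∈ h.support, ∀ j, (∀ i < j, e' i = e i) → e j ≤ e' j) (j : Fin q) :
    ∑ i ∈ Finset.Iic j, e i + ∑ i ∈ Finset.Iio j, e i ≤ c + ∑ i ∈ Finset.Iio j, N i := by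
  induction q generalizing c with
  | zero => exact j.elim0
  | succ q ih =>
    obtain ⟨hc0, hc1⟩ := natDegree_translate_coeff_finSuccEquiv hc (fun e' he' ↦ hN e' he' 0) he
      fun e' he' ↦ hmin e' he' 0 fun i hi ↦ absurd hi (Fin.not_lt_zero i)
    refine Fin.cases ?_ (fun j ↦ ?_) j
    · have hIic : Finset.Iic (0 : Fin (q + 1)) = {0} := by ext; simp
      have hIio : Finset.Iio (0 : Fin (q + 1)) = ∅ := by ext; simp
      simpa [hIic, hIio] using hc0
    have hmem : ∀ {e'}, e' ∈ ((finSuccEquiv K q h).coeff (e 0)).support →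
        e'.cons (e 0) ∈ h.support := mem_support_coeff_finSuccEquiv.1
    have := ih (c := c + N 0 - 2 * e 0) (h := (finSuccEquiv K q h).coeff (e 0)) (e := e.tail)
      (N := fun i ↦ N i.succ) (by omega) (fun e' he' i ↦ by simpa using hN _ (hmem he') i.succ)
      (by rwa [mem_support_coeff_finSuccEquiv, Finsupp.cons_tail])
      (fun e' he' j hj ↦ by
        simpa [Finsupp.tail_apply] using hmin _ (hmem he') j.succ fun i hi ↦ by
          refine Fin.cases (fun _ ↦ by simp) (fun i hi ↦ ?_) i hi
          simpa [Finsupp.tail_apply] using hj i (Fin.succ_lt_succ_iff.1 hi)) j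
    simp only [Finsupp.tail_apply] at this
    rw [sum_Iic_succ, sum_Iio_succ, sum_Iio_succ]
    omega

lemma translate_eq_C {K σ : Type*} [CommRing K] [IsDomain K] [Infinite K] {h : MvPolynomial σ K}
    (hinv : ∀ t : K, aeval (fun i ↦ X i + C t) h = h) : translate K σ h = Polynomial.C h := by
  refine Polynomial.eq_of_infinite_eval_eq _ _ <| Set.Infinite.mono ?_
    (Set.infinite_range_of_injective (C_injective σ K))
  rintro _ ⟨t, rfl⟩
  exact (eval_translate t h).trans ((hinv t).trans Polynomial.eval_C.symm)

section Regrading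

variable {K ι σ : Type*} [CommRing K] (a b : σ → ι)

/-- The shear `x (b i) ↦ x (b i) + t * x (a i)` of the variables indexed by the range of `b`, the
other variables being fixed. -/
noncomputable def shear (t : K) : MvPolynomial ι K →ₐ[K] MvPolynomial ι K :=
  aeval fun v ↦ X v + C t * Function.extend b (X ∘ a) 0 v

/-- The substitution `x (b i) ↦ s i * x (a i)` with new variables `s i`, which records the
exponents of the `x (b i)` in `s` and turns the shear along `a` and `b` into the translation
`s i ↦ s i + t`. -/
noncomputable def regrade : MvPolynomial ι K →ₐ[K] MvPolynomial ι (MvPolynomial σ K) :=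
  aeval fun v ↦ C (Function.extend b X 1 v) * X (Function.extend b a id v)

variable {a b}

lemma regrade_monomial (hb : b.Injective) (e : ι →₀ ℕ) (c : K) :
    regrade a b (monomial e c) = monomial (e.mapDomain (Function.extend b a id))
      (monomial (e.comapDomain b hb.injOn) c) := by
  induction e using Finsupp.induction_linear generalizing c with
  | zero => simp [regrade, MvPolynomial.algebraMap_apply, algebraMap_eq, ← C_apply]
  | add e e' he he' =>
    rw [← mul_one c, ← monomial_mul, map_mul, he, he', Finsupp.mapDomain_add,
      Finsupp.comapDomain_add_of_injective hb, ← monomial_mul, ← monomial_mul]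
  | single v k =>
    have hsingle : monomial ((Finsupp.single v k).comapDomain b hb.injOn) c =
        C c * Function.extend b X 1 v ^ k := by
      by_cases hv : ∃ i, b i = v
      · obtain ⟨i, rfl⟩ := hv
        rw [hb.extend_apply, C_mul_X_pow_eq_monomial, Finsupp.comapDomain_single]
      · have : (Finsupp.single v k).comapDomain b hb.injOn = 0 := Finsupp.ext fun i ↦
          Finsupp.single_eq_of_ne fun h ↦ hv ⟨i, h⟩
        rw [Function.extend_apply' _ _ _ hv, Pi.one_apply, one_pow, mul_one, C_apply, this]
    rw [hsingle, Finsupp.mapDomain_single, ← C_mul_X_pow_eq_monomial, ← C_mul_X_pow_eq_monomial,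
      map_mul, map_pow, regrade, aeval_X, aeval_C, MvPolynomial.algebraMap_apply, algebraMap_eq,
      mul_pow, C_mul, C_pow, mul_assoc]

lemma mapAlgHom_regrade (hb : b.Injective) (hab : ∀ i j, a i ≠ b j) (t : K)
    (G : MvPolynomial ι K) :
    MvPolynomial.map (aeval fun i ↦ X i + C t : MvPolynomial σ K →ₐ[K] _).toRingHom
      (regrade a b G) = regrade a b (shear a b t G) := by
  suffices ((mapAlgHom (aeval fun i ↦ X i + C t)).comp (regrade a b) : MvPolynomial ι K →ₐ[K] _) =
      (regrade a b).comp (shear a b t) from DFunLike.congr_fun this G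
  refine algHom_ext fun v ↦ ?_
  by_cases hv : ∃ i, b i = v
  · obtain ⟨i, rfl⟩ := hv
    have ha : ¬ ∃ j, b j = a i := fun ⟨j, hj⟩ ↦ hab i j hj.symm
    simp [regrade, shear, hb.extend_apply, Function.extend_apply' _ _ _ ha, add_mul,
      MvPolynomial.algebraMap_apply, algebraMap_eq]
  · simp [regrade, shear, Function.extend_apply' _ _ _ hv]

lemma regrade_eq_sum (hb : b.Injective) (G : MvPolynomial ι K) :
    regrade a b G = ∑ e ∈ G.support, monomial (e.mapDomain (Function.extend b a id))
      (monomial (e.comapDomain b hb.injOn) (coeff e G)) := by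
  conv_lhs => rw [G.as_sum, map_sum]
  simp only [regrade_monomial hb]

lemma exists_mem_support_of_mem_support_coeff_regrade (hb : b.Injective) {G : MvPolynomial ι K}
    {d : ι →₀ ℕ} {κ : σ →₀ ℕ} (hκ : κ ∈ (coeff d (regrade a b G)).support) :
    ∃ e ∈ G.support, e.mapDomain (Function.extend b a id) = d ∧ e.comapDomain b hb.injOn = κ := by
  classical
  rw [mem_support_iff, regrade_eq_sum hb, coeff_sum, coeff_sum] at hκ
  obtain ⟨e, he, hne⟩ := Finset.exists_ne_zero_of_sum_ne_zero hκ
  rw [coeff_monomial] at hne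
  split_ifs at hne with hd
  · rw [coeff_monomial] at hne
    exact ⟨e, he, hd, by_contra fun h ↦ hne (if_neg h)⟩
  · exact absurd rfl hne

lemma mapDomain_extend_apply (hb : b.Injective) (ha : a.Injective) (hab : ∀ i j, a i ≠ b j)
    (e : ι →₀ ℕ) (i : σ) :
    e.mapDomain (Function.extend b a id) (a i) = e (a i) + e (b i) := by
  classical
  induction e using Finsupp.induction_linear with
  | zero => simp
  | add e e' he he' => simp only [Finsupp.mapDomain_add, Finsupp.add_apply, he, he']; ring
  | single v k =>
    rw [Finsupp.mapDomain_single]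
    by_cases hv : ∃ j, b j = v
    · obtain ⟨j, rfl⟩ := hv
      simp [hb.extend_apply, Finsupp.single_apply, (hab i j).symm, hb.eq_iff, ha.eq_iff]
    · have : v ≠ b i := fun h ↦ hv ⟨i, h.symm⟩
      simp [Function.extend_apply' _ _ _ hv, Finsupp.single_apply, this]

lemma mapDomain_extend_apply_of_notMem (hb : b.Injective) {v : ι}
    (hva : v ∉ Set.range a) (hvb : v ∉ Set.range b) (e : ι →₀ ℕ) :
    e.mapDomain (Function.extend b a id) v = e v := by
  classical
  induction e using Finsupp.induction_linear with
  | zero => simp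
  | add e e' he he' => simp only [Finsupp.mapDomain_add, Finsupp.add_apply, he, he']
  | single w k =>
    rw [Finsupp.mapDomain_single]
    by_cases hw : ∃ j, b j = w
    · obtain ⟨j, rfl⟩ := hw
      rw [hb.extend_apply, Finsupp.single_eq_of_ne fun h ↦ hva ⟨j, h.symm⟩,
        Finsupp.single_eq_of_ne fun h ↦ hvb ⟨j, h.symm⟩]
    · rw [Function.extend_apply' _ _ _ hw, id]

lemma eq_of_mapDomain_extend_eq (hb : b.Injective) (ha : a.Injective) (hab : ∀ i j, a i ≠ b j)
    {e e' : ι →₀ ℕ}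
    (hmap : e.mapDomain (Function.extend b a id) = e'.mapDomain (Function.extend b a id))
    (hcomap : ∀ i, e (b i) = e' (b i)) : e = e' := by
  ext v
  by_cases hvb : v ∈ Set.range b
  · obtain ⟨i, rfl⟩ := hvb
    exact hcomap i
  by_cases hva : v ∈ Set.range a
  · obtain ⟨i, rfl⟩ := hva
    have := DFunLike.congr_fun hmap (a i)
    rw [mapDomain_extend_apply hb ha hab, mapDomain_extend_apply hb ha hab, hcomap i] at this
    exact Nat.add_right_cancel this
  · rw [← mapDomain_extend_apply_of_notMem hb hva hvb e, hmap,
      mapDomain_extend_apply_of_notMem hb hva hvb]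

lemma comapDomain_mem_support_coeff_regrade (hb : b.Injective) (ha : a.Injective)
    (hab : ∀ i j, a i ≠ b j) {G : MvPolynomial ι K} {e : ι →₀ ℕ} (he : e ∈ G.support) :
    e.comapDomain b hb.injOn ∈
      (coeff (e.mapDomain (Function.extend b a id)) (regrade a b G)).support := by
  classical
  rw [mem_support_iff, regrade_eq_sum hb, coeff_sum, coeff_sum, Finset.sum_eq_single_of_mem e he]
  · rwa [coeff_monomial, if_pos rfl, coeff_monomial, if_pos rfl, ← mem_support_iff]
  · intro e' _ hne
    rw [coeff_monomial]
    split_ifs with hmap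
    · rw [coeff_monomial, if_neg]
      exact fun h ↦ hne (eq_of_mapDomain_extend_eq hb ha hab hmap fun i ↦ DFunLike.congr_fun h i)
    · exact coeff_zero _

end Regrading

/-- Shear invariance forces the exponents of a lexicographically minimal monomial to satisfy the
ballot inequalities. -/
theorem sum_Iic_le_sum_Iio_of_shear_invariant {K ι : Type*} [CommRing K] [IsDomain K] [Infinite K]
    {q : ℕ} {a b : Fin q → ι} (ha : a.Injective) (hb : b.Injective) (hab : ∀ i j, a i ≠ b j)
    {G : MvPolynomial ι K} (hG : ∀ t, shear a b t G = G) {e : ι →₀ ℕ} (he : e ∈ G.support)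
    (hmin : ∀ e' ∈ G.support, (∀ v, v ∉ Set.range a → v ∉ Set.range b → e' v = e v) →
      (∀ i, e' (a i) + e' (b i) = e (a i) + e (b i)) →
      ∀ j, (∀ i < j, e' (b i) = e (b i)) → e (b j) ≤ e' (b j)) (j : Fin q) :
    ∑ i ∈ Finset.Iic j, e (b i) ≤ ∑ i ∈ Finset.Iio j, e (a i) := by
  set p := coeff (e.mapDomain (Function.extend b a id)) (regrade a b G) with hp
  have hinv (t : K) : aeval (fun i ↦ X i + C t) p = p := by
    conv_rhs => rw [hp, ← hG t, ← mapAlgHom_regrade hb hab t, coeff_map]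
    rfl
  have hsum {e' : ι →₀ ℕ} (h : e'.mapDomain (Function.extend b a id) =
      e.mapDomain (Function.extend b a id)) (i : Fin q) :
      e' (a i) + e' (b i) = e (a i) + e (b i) := by
    rw [← mapDomain_extend_apply hb ha hab, h, mapDomain_extend_apply hb ha hab]
  have hbound := sum_Iic_add_sum_Iio_le (c := 0) (h := p) (N := fun i ↦ e (a i) + e (b i))
    (e := e.comapDomain b hb.injOn) (by simp [translate_eq_C hinv])
    (fun κ hκ i ↦ by
      obtain ⟨e', -, hmap, rfl⟩ := exists_mem_support_of_mem_support_coeff_regrade hb hκ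
      exact hsum hmap i ▸ Nat.le_add_left _ _)
    (comapDomain_mem_support_coeff_regrade hb ha hab he)
    (fun κ hκ j hj ↦ by
      obtain ⟨e', he', hmap, rfl⟩ := exists_mem_support_of_mem_support_coeff_regrade hb hκ
      refine hmin e' he' (fun v hva hvb ↦ ?_) (hsum hmap) j hj
      rw [← mapDomain_extend_apply_of_notMem hb hva hvb e', hmap,
        mapDomain_extend_apply_of_notMem hb hva hvb]) j
  simp only [Finsupp.comapDomain_apply, Finset.sum_add_distrib] at hbound
  omega

end ShearInvariance

section Pictures

/-- The sum of the first `s` entries of column `c` of the table `A`. -/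
def colPrefix (A : ℕ → ℕ → ℕ) (s c : ℕ) : ℕ := ∑ i ∈ Finset.range s, A i c

/-- The sum of the first `c` entries of row `s` of the table `A`. -/
def rowPrefix (A : ℕ → ℕ → ℕ) (s c : ℕ) : ℕ := ∑ j ∈ Finset.range c, A s j

lemma colPrefix_succ (A : ℕ → ℕ → ℕ) (s c : ℕ) :
    colPrefix A (s + 1) c = colPrefix A s c + A s c :=
  Finset.sum_range_succ ..

lemma rowPrefix_succ (A : ℕ → ℕ → ℕ) (s c : ℕ) :
    rowPrefix A s (c + 1) = rowPrefix A s c + A s c :=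
  Finset.sum_range_succ ..

lemma monotone_colPrefix (A : ℕ → ℕ → ℕ) (c : ℕ) : Monotone fun s ↦ colPrefix A s c :=
  monotone_nat_of_le_succ fun s ↦ by rw [colPrefix_succ]; exact Nat.le_add_right _ _

lemma monotone_rowPrefix (A : ℕ → ℕ → ℕ) (s : ℕ) : Monotone (rowPrefix A s) :=
  monotone_nat_of_le_succ fun c ↦ by rw [rowPrefix_succ]; exact Nat.le_add_right _ _

/-- The index `j` of the interval `[f j, f (j + 1))` containing `k`; it is meant for a monotone `f`
with `f 0 = 0` and a `k` below some value of `f`. -/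
noncomputable def intervalIndex (f : ℕ → ℕ) (k : ℕ) : ℕ := sInf {j | k < f (j + 1)}

lemma intervalIndex_spec {f : ℕ → ℕ} (h0 : f 0 = 0) {k N : ℕ} (hk : k < f N) :
    intervalIndex f k < N ∧ f (intervalIndex f k) ≤ k ∧ k < f (intervalIndex f k + 1) := by
  obtain ⟨N, rfl⟩ : ∃ N', N = N' + 1 :=
    Nat.exists_eq_add_one_of_ne_zero fun hN ↦ by simp [hN, h0] at hk
  refine ⟨Nat.lt_succ_of_le (Nat.sInf_le hk), ?_, Nat.sInf_mem (s := {j | k < f (j + 1)}) ⟨N, hk⟩⟩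
  by_contra! hlt
  rcases h : intervalIndex f k with _ | j
  · simp [h, h0] at hlt
  · have : intervalIndex f k ≤ j := Nat.sInf_le (show k < f (j + 1) from h ▸ hlt)
    omega

lemma eq_of_mem_interval {f : ℕ → ℕ} (hf : Monotone f) {k c c' : ℕ} (h₁ : f c ≤ k)
    (h₂ : k < f (c + 1)) (h₁' : f c' ≤ k) (h₂' : k < f (c' + 1)) : c = c' :=
  le_antisymm (Nat.lt_succ_iff.1 (hf.reflect_lt (h₁.trans_lt h₂')))
    (Nat.lt_succ_iff.1 (hf.reflect_lt (h₁'.trans_lt h₂)))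

/-- The tables that occur as exponents of leading monomials. Row `s < M` belongs to the block
`block s`, and `A s c` is the exponent of the variable in row `s` and column `c < n`. The cells of
the diagram of `A` are the pairs `(k, s)` with `k < rowPrefix A s n`; by `colPrefix_eq` there are as
many of them as positions `(l, c)` in a `d × n` rectangle. -/
structure PictureTable (A : ℕ → ℕ → ℕ) (n M d : ℕ) (block : ℕ → ℕ) : Prop where
  eq_zero : ∀ s, M ≤ s → ∀ c, A s c = 0
  colPrefix_succ_le : ∀ s < M, ∀ c, c + 1 < n → colPrefix A (s + 1) (c + 1) ≤ colPrefix A s c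
  rowPrefix_succ_le : ∀ s, s + 1 < M → block s = block (s + 1) → ∀ c < n,
    rowPrefix A (s + 1) (c + 1) ≤ rowPrefix A s c
  colPrefix_eq : ∀ c < n, colPrefix A M c = d
  monotone_block : Monotone block

/-- The column `c` of the position `(l, c)` assigned to the cell `(k, s)`: row `s` of the diagram is
cut into consecutive segments of lengths `A s 0, A s 1, …`. -/
noncomputable def cellColumn (A : ℕ → ℕ → ℕ) (k s : ℕ) : ℕ := intervalIndex (rowPrefix A s) k

/-- The level `l` of the position `(l, c)` assigned to the cell `(k, s)`: the segment of row `s` in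
column `c` fills the levels `[colPrefix A s c, colPrefix A (s + 1) c)` from top to bottom. -/
noncomputable def cellLevel (A : ℕ → ℕ → ℕ) (k s : ℕ) : ℕ :=
  colPrefix A (s + 1) (cellColumn A k s) - 1 - (k - rowPrefix A s (cellColumn A k s))

lemma cellColumn_spec {A : ℕ → ℕ → ℕ} {n k s : ℕ} (hk : k < rowPrefix A s n) :
    cellColumn A k s < n ∧ rowPrefix A s (cellColumn A k s) ≤ k ∧
      k < rowPrefix A s (cellColumn A k s + 1) :=
  intervalIndex_spec (by simp [rowPrefix]) hk

lemma cellColumn_eq_iff {A : ℕ → ℕ → ℕ} {n k s c : ℕ} (hk : k < rowPrefix A s n) :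
    cellColumn A k s = c ↔ rowPrefix A s c ≤ k ∧ k < rowPrefix A s (c + 1) := by
  obtain ⟨-, h₁, h₂⟩ := cellColumn_spec hk
  exact ⟨fun h ↦ h ▸ ⟨h₁, h₂⟩, fun h ↦ eq_of_mem_interval (monotone_rowPrefix A s) h₁ h₂ h.1 h.2⟩

lemma cellLevel_spec {A : ℕ → ℕ → ℕ} {n k s : ℕ} (hk : k < rowPrefix A s n) :
    colPrefix A s (cellColumn A k s) ≤ cellLevel A k s ∧
      cellLevel A k s < colPrefix A (s + 1) (cellColumn A k s) ∧
      cellLevel A k s + 1 + k =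
        colPrefix A (s + 1) (cellColumn A k s) + rowPrefix A s (cellColumn A k s) := by
  obtain ⟨-, h₁, h₂⟩ := cellColumn_spec hk
  have h₃ := colPrefix_succ A s (cellColumn A k s)
  have h₄ := rowPrefix_succ A s (cellColumn A k s)
  unfold cellLevel
  omega

lemma exists_cell_of_lt_colPrefix {A : ℕ → ℕ → ℕ} {n l c s : ℕ} (hc : c < n)
    (hl : l < colPrefix A s c) :
    ∃ s' < s, ∃ k < rowPrefix A s' n, cellLevel A k s' = l ∧ cellColumn A k s' = c := by
  obtain ⟨hs, h₁, h₂⟩ := intervalIndex_spec (f := fun s ↦ colPrefix A s c) (by simp [colPrefix]) hl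
  set s' := intervalIndex (fun s ↦ colPrefix A s c) l
  have h₃ := colPrefix_succ A s' c
  have h₄ := rowPrefix_succ A s' c
  obtain ⟨k, hk⟩ : ∃ k, k = rowPrefix A s' c + (colPrefix A (s' + 1) c - 1 - l) := ⟨_, rfl⟩
  have hkn : k < rowPrefix A s' n :=
    lt_of_lt_of_le (by omega) (monotone_rowPrefix A s' (show c + 1 ≤ n from hc))
  have hcol : cellColumn A k s' = c := (cellColumn_eq_iff hkn).2 (by omega)
  have hlevel := (cellLevel_spec hkn).2.2
  rw [hcol] at hlevel
  exact ⟨s', hs, k, hkn, by omega, hcol⟩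

lemma cell_injective {A : ℕ → ℕ → ℕ} {n k s k' s' : ℕ} (hk : k < rowPrefix A s n)
    (hk' : k' < rowPrefix A s' n) (hlevel : cellLevel A k s = cellLevel A k' s')
    (hcol : cellColumn A k s = cellColumn A k' s') : s = s' ∧ k = k' := by
  obtain ⟨h₁, h₂, h₃⟩ := cellLevel_spec hk
  obtain ⟨h₁', h₂', h₃'⟩ := cellLevel_spec hk'
  rw [← hcol, ← hlevel] at h₁' h₂' h₃'
  obtain rfl : s = s' := eq_of_mem_interval (monotone_colPrefix A _) h₁ h₂ h₁' h₂'
  exact ⟨rfl, by omega⟩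

lemma card_filter_cellColumn_eq (A : ℕ → ℕ → ℕ) {n c : ℕ} (s : ℕ) (hc : c < n) :
    {k ∈ Finset.range (rowPrefix A s n) | cellColumn A k s = c}.card = A s c := by
  have hfilter : {k ∈ Finset.range (rowPrefix A s n) | cellColumn A k s = c} =
      Finset.Ico (rowPrefix A s c) (rowPrefix A s (c + 1)) := by
    ext k
    simp only [Finset.mem_filter, Finset.mem_range, Finset.mem_Ico]
    refine ⟨fun ⟨hk, h⟩ ↦ (cellColumn_eq_iff hk).1 h, fun h ↦ ?_⟩
    have hk : k < rowPrefix A s n := h.2.trans_le (monotone_rowPrefix A s (Nat.succ_le_of_lt hc))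
    exact ⟨hk, (cellColumn_eq_iff hk).2 h⟩
  rw [hfilter, Nat.card_Ico, rowPrefix_succ, Nat.add_sub_cancel_left]

namespace PictureTable

variable {A : ℕ → ℕ → ℕ} {n M d : ℕ} {block : ℕ → ℕ}

lemma row_lt (hA : PictureTable A n M d block) {k s : ℕ} (hk : k < rowPrefix A s n) : s < M := by
  by_contra! hs
  have : rowPrefix A s n = 0 := Finset.sum_eq_zero fun c _ ↦ hA.eq_zero s hs c
  omega

lemma rowPrefix_le_mul (hA : PictureTable A n M d block) (s : ℕ) : rowPrefix A s n ≤ n * d := by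
  have hentry : ∀ c ∈ Finset.range n, A s c ≤ d := fun c hc ↦ by
    rcases lt_or_ge s M with hs | hs
    · rw [← hA.colPrefix_eq c (Finset.mem_range.1 hc)]
      exact Finset.single_le_sum (f := (A · c)) (fun _ _ ↦ Nat.zero_le _) (Finset.mem_range.2 hs)
    · rw [hA.eq_zero s hs c]
      exact Nat.zero_le d
  simpa only [rowPrefix, Finset.card_range, smul_eq_mul] using Finset.sum_le_card_nsmul _ _ _ hentry

lemma cellLevel_lt (hA : PictureTable A n M d block) {k s : ℕ} (hk : k < rowPrefix A s n) :
    cellLevel A k s < d :=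
  calc cellLevel A k s < colPrefix A (s + 1) (cellColumn A k s) := (cellLevel_spec hk).2.1
    _ ≤ colPrefix A M (cellColumn A k s) := monotone_colPrefix A _ (hA.row_lt hk)
    _ = d := hA.colPrefix_eq _ (cellColumn_spec hk).1

lemma colPrefix_anti (hA : PictureTable A n M d block) {s c₁ c₂ : ℕ} (hs : s < M) (h : c₁ ≤ c₂)
    (h₂ : c₂ < n) : colPrefix A s c₂ ≤ colPrefix A s c₁ := by
  induction c₂, h using Nat.le_induction with
  | base => rfl
  | succ c _ ih =>
    calc colPrefix A s (c + 1) ≤ colPrefix A (s + 1) (c + 1) := by simp [colPrefix_succ]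
      _ ≤ colPrefix A s c := hA.colPrefix_succ_le s hs c h₂
      _ ≤ colPrefix A s c₁ := ih (by omega)

lemma colPrefix_succ_le_of_lt (hA : PictureTable A n M d block) {s c₁ c₂ : ℕ} (hs : s < M)
    (h : c₁ < c₂) (h₂ : c₂ < n) : colPrefix A (s + 1) c₂ ≤ colPrefix A s c₁ := by
  obtain ⟨c, rfl⟩ := Nat.exists_eq_add_one_of_ne_zero (Nat.ne_zero_of_lt h)
  exact (hA.colPrefix_succ_le s hs c h₂).trans (hA.colPrefix_anti hs (by omega) (by omega))

lemma colPrefix_succ_add_rowPrefix_anti (hA : PictureTable A n M d block) {s c₁ c₂ : ℕ}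
    (hs : s < M) (h : c₁ ≤ c₂) (h₂ : c₂ < n) :
    colPrefix A (s + 1) c₂ + rowPrefix A s c₂ ≤ colPrefix A (s + 1) c₁ + rowPrefix A s c₁ := by
  induction c₂, h using Nat.le_induction with
  | base => rfl
  | succ c _ ih =>
    have h₃ := hA.colPrefix_succ_le s hs c h₂
    have h₄ := colPrefix_succ A s c
    have h₅ := rowPrefix_succ A s c
    have h₆ := ih (by omega)
    omega

lemma rowLength_succ_le (hA : PictureTable A n M d block) {s : ℕ} (hs : s + 1 < M)
    (hb : block s = block (s + 1)) : rowPrefix A (s + 1) n ≤ rowPrefix A s n := by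
  rcases n with _ | n
  · simp [rowPrefix]
  · exact (hA.rowPrefix_succ_le s hs hb n (Nat.lt_succ_self n)).trans
      (monotone_rowPrefix A s n.le_succ)

lemma block_eq_of_le (hA : PictureTable A n M d block) {s t : ℕ} (h : s ≤ t)
    (hb : block s = block (t + 1)) : block s = block t ∧ block t = block (t + 1) := by
  have h₁ := hA.monotone_block h
  have h₂ := hA.monotone_block (Nat.le_add_right t 1)
  omega

lemma rowLength_anti (hA : PictureTable A n M d block) {s s' : ℕ} (h : s ≤ s') (hs' : s' < M)
    (hb : block s = block s') : rowPrefix A s' n ≤ rowPrefix A s n := by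
  induction s', h using Nat.le_induction with
  | base => rfl
  | succ t ht ih =>
    obtain ⟨hb₁, hb₂⟩ := hA.block_eq_of_le ht hb
    exact (hA.rowLength_succ_le hs' hb₂).trans (ih (by omega) hb₁)

lemma cellLevel_succ_le (hA : PictureTable A n M d block) {k s : ℕ} (hb : block s = block (s + 1))
    (hk : k < rowPrefix A (s + 1) n) : cellLevel A k (s + 1) ≤ cellLevel A k s := by
  have hs := hA.row_lt hk
  have hk₀ : k < rowPrefix A s n := hk.trans_le (hA.rowLength_succ_le hs hb)
  obtain ⟨hc', -, hk'⟩ := cellColumn_spec hk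
  obtain ⟨-, hkc, -⟩ := cellColumn_spec hk₀
  have e₁ := (cellLevel_spec hk).2.2
  have e₂ := (cellLevel_spec hk₀).2.2
  set c' := cellColumn A k (s + 1)
  set c := cellColumn A k s
  have hcc' : c < c' := by
    by_contra! hle
    refine hk'.not_ge ?_
    calc rowPrefix A (s + 1) (c' + 1) ≤ rowPrefix A s c' := hA.rowPrefix_succ_le s hs hb c' hc'
      _ ≤ rowPrefix A s c := monotone_rowPrefix A s hle
      _ ≤ k := hkc
  obtain ⟨c'', hc''⟩ := Nat.exists_eq_add_one_of_ne_zero (Nat.ne_zero_of_lt hcc')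
  rw [hc''] at e₁ hc' hcc'
  have h₁ := hA.colPrefix_succ_le (s + 1) hs c'' hc'
  have h₂ := hA.rowPrefix_succ_le s hs hb c'' (by omega)
  have h₃ := hA.colPrefix_succ_add_rowPrefix_anti (s := s) (by omega) (Nat.lt_succ_iff.1 hcc')
    (by omega)
  omega

lemma cellLevel_anti (hA : PictureTable A n M d block) {k s s' : ℕ} (h : s ≤ s')
    (hb : block s = block s') (hk : k < rowPrefix A s' n) : cellLevel A k s' ≤ cellLevel A k s := by
  induction s', h using Nat.le_induction with
  | base => rfl
  | succ t ht ih =>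
    obtain ⟨hb₁, hb₂⟩ := hA.block_eq_of_le ht hb
    exact (hA.cellLevel_succ_le hb₂ hk).trans
      (ih hb₁ (hk.trans_le (hA.rowLength_succ_le (hA.row_lt hk) hb₂)))

end PictureTable

/-- A filling of the diagram of `A` that sends the cell `(k, s)` to the level `L k s` and the column
`C k s` and competes with the filling `(cellLevel A, cellColumn A)`: it has the same levels, counted
by block and column index of the diagram, and its letter counts are not lexicographically smaller
than `A`. -/
structure RivalFilling (A : ℕ → ℕ → ℕ) (n M : ℕ) (block : ℕ → ℕ) (L C : ℕ → ℕ → ℕ) : Prop where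
  injective : ∀ k s k' s', k < rowPrefix A s n → k' < rowPrefix A s' n → L k s = L k' s' →
    C k s = C k' s' → s = s' ∧ k = k'
  col_lt : ∀ k s, k < rowPrefix A s n → C k s < n
  level_count : ∀ i k l,
    {s ∈ Finset.range M | block s = i ∧ k < rowPrefix A s n ∧ L k s = l}.card =
      {s ∈ Finset.range M | block s = i ∧ k < rowPrefix A s n ∧ cellLevel A k s = l}.card
  le_letter_count : ∀ s < M,
    (∀ s' < s, ∀ c < n, {k ∈ Finset.range (rowPrefix A s' n) | C k s' = c}.card = A s' c) →
    ∀ c < n, (∀ c' < c, {k ∈ Finset.range (rowPrefix A s n) | C k s = c'}.card = A s c') →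
    A s c ≤ {k ∈ Finset.range (rowPrefix A s n) | C k s = c}.card

namespace RivalFilling

variable {A L C : ℕ → ℕ → ℕ} {n M d k s : ℕ} {block : ℕ → ℕ}

lemma level_le (hA : PictureTable A n M d block) (hR : RivalFilling A n M block L C)
    (ih : ∀ s' < s, ∀ k, k < rowPrefix A s' n → L k s' = cellLevel A k s')
    (hk : k < rowPrefix A s n) : L k s ≤ cellLevel A k s := by
  by_contra! hgt
  have hssub : {t ∈ Finset.range M | block t = block s ∧ k < rowPrefix A t n ∧
        cellLevel A k t = L k s} ⊂
      {t ∈ Finset.range M | block t = block s ∧ k < rowPrefix A t n ∧ L k t = L k s} := by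
    refine (Finset.ssubset_iff_of_subset fun t ht ↦ ?_).2 ⟨s, ?_, fun h ↦ ?_⟩
    · simp only [Finset.mem_filter] at ht ⊢
      obtain ⟨htM, htb, htk, htL⟩ := ht
      have hts : t < s := by
        by_contra! hle
        have := hA.cellLevel_anti hle htb.symm htk
        omega
      exact ⟨htM, htb, htk, (ih t hts k htk).trans htL⟩
    · simpa using ⟨hA.row_lt hk, hk⟩
    · exact hgt.ne (Finset.mem_filter.1 h).2.2.2
  exact (Finset.card_lt_card hssub).ne' (hR.level_count (block s) k (L k s))

lemma colPrefix_le_level (hR : RivalFilling A n M block L C)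
    (ih : ∀ s' < s, ∀ k, k < rowPrefix A s' n →
      L k s' = cellLevel A k s' ∧ C k s' = cellColumn A k s')
    (hk : k < rowPrefix A s n) : colPrefix A s (C k s) ≤ L k s := by
  by_contra! hgt
  obtain ⟨s', hs', k', hk', hl, hc⟩ := exists_cell_of_lt_colPrefix (hR.col_lt k s hk) hgt
  obtain ⟨hL, hC⟩ := ih s' hs' k' hk'
  exact hs'.ne' (hR.injective k s k' s' hk hk' (hL.trans hl).symm (hC.trans hc).symm).1

lemma cellColumn_le_col (hA : PictureTable A n M d block) (hR : RivalFilling A n M block L C)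
    (ih : ∀ s' < s, ∀ k, k < rowPrefix A s' n →
      L k s' = cellLevel A k s' ∧ C k s' = cellColumn A k s')
    (hk : k < rowPrefix A s n) : cellColumn A k s ≤ C k s := by
  by_contra! hlt
  refine (cellLevel_spec hk).2.1.not_ge ?_
  calc colPrefix A (s + 1) (cellColumn A k s)
      ≤ colPrefix A s (C k s) :=
        hA.colPrefix_succ_le_of_lt (hA.row_lt hk) hlt (cellColumn_spec hk).1
    _ ≤ L k s := hR.colPrefix_le_level ih hk
    _ ≤ cellLevel A k s := hR.level_le hA (fun s' hs' k hk ↦ (ih s' hs' k hk).1) hk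

lemma filter_col_eq (hR : RivalFilling A n M block L C) (hs : s < M)
    (ih : ∀ s' < s, ∀ k, k < rowPrefix A s' n → C k s' = cellColumn A k s')
    (hle : ∀ k, k < rowPrefix A s n → cellColumn A k s ≤ C k s) {c : ℕ} (hc : c < n) :
    {k ∈ Finset.range (rowPrefix A s n) | C k s = c} =
      {k ∈ Finset.range (rowPrefix A s n) | cellColumn A k s = c} := by
  induction c using Nat.strong_induction_on with
  | _ c ihc =>
    refine Finset.eq_of_subset_of_card_le (fun k hk ↦ ?_) ?_
    · rw [Finset.mem_filter] at hk
      obtain ⟨hk, rfl⟩ := hk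
      refine Finset.mem_filter.2 ⟨hk, (hle k (Finset.mem_range.1 hk)).antisymm ?_⟩
      by_contra! hlt
      have hmem : k ∈ {j ∈ Finset.range (rowPrefix A s n) | cellColumn A j s = cellColumn A k s} :=
        Finset.mem_filter.2 ⟨hk, rfl⟩
      rw [← ihc _ hlt (hlt.trans hc)] at hmem
      exact hlt.ne' (Finset.mem_filter.1 hmem).2
    · rw [card_filter_cellColumn_eq A s hc]
      refine hR.le_letter_count s hs (fun s' hs' c' hc' ↦ ?_) c hc fun c' hc' ↦ ?_
      · rw [← card_filter_cellColumn_eq A s' hc']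
        refine congrArg _ (Finset.filter_congr fun k hk ↦ ?_)
        rw [ih s' hs' k (Finset.mem_range.1 hk)]
      · rw [ihc c' hc' (hc'.trans hc), card_filter_cellColumn_eq A s (hc'.trans hc)]

lemma level_eq (hR : RivalFilling A n M block L C)
    (hC : ∀ k, k < rowPrefix A s n → C k s = cellColumn A k s)
    (hge : ∀ k, k < rowPrefix A s n → colPrefix A s (C k s) ≤ L k s)
    (hle : ∀ k, k < rowPrefix A s n → L k s ≤ cellLevel A k s)
    (hk : k < rowPrefix A s n) : L k s = cellLevel A k s := by
  induction hj : rowPrefix A s n - k using Nat.strong_induction_on generalizing k with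
  | _ j ihj =>
    subst hj
    by_contra hne
    have h₁ := hle k hk
    have h₂ := hge k hk
    rw [hC k hk] at h₂
    obtain ⟨-, -, h₃⟩ := cellLevel_spec hk
    obtain ⟨hn, h₄, -⟩ := cellColumn_spec hk
    have h₅ := colPrefix_succ A s (cellColumn A k s)
    have h₆ := rowPrefix_succ A s (cellColumn A k s)
    have h₇ := monotone_rowPrefix A s (show cellColumn A k s + 1 ≤ n from hn)
    -- The level `L k s` is already taken by the cell of the same segment that should have it.
    obtain ⟨k', hk'⟩ : ∃ k', k' = k + (cellLevel A k s - L k s) := ⟨_, rfl⟩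
    have hk'n : k' < rowPrefix A s n := by omega
    have hcol : cellColumn A k' s = cellColumn A k s := (cellColumn_eq_iff hk'n).2 (by omega)
    have hlevel := (cellLevel_spec hk'n).2.2
    rw [hcol] at hlevel
    have hL := ihj (rowPrefix A s n - k') (by omega) hk'n rfl
    have := (hR.injective k s k' s hk hk'n (by omega) (by rw [hC k hk, hC k' hk'n, hcol])).2
    omega

theorem eq_cell (hA : PictureTable A n M d block) (hR : RivalFilling A n M block L C)
    (hk : k < rowPrefix A s n) : L k s = cellLevel A k s ∧ C k s = cellColumn A k s := by
  induction s using Nat.strong_induction_on generalizing k with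
  | _ s ih =>
    replace ih := fun s' hs' k ↦ @ih s' hs' k
    have hle : ∀ k, k < rowPrefix A s n → L k s ≤ cellLevel A k s :=
      fun k ↦ hR.level_le hA fun s' hs' k hk ↦ (ih s' hs' k hk).1
    have hC : ∀ k, k < rowPrefix A s n → C k s = cellColumn A k s := fun k hk ↦ by
      have hmem : k ∈ {j ∈ Finset.range (rowPrefix A s n) | cellColumn A j s = cellColumn A k s} :=
        Finset.mem_filter.2 ⟨Finset.mem_range.2 hk, rfl⟩
      rw [← hR.filter_col_eq (hA.row_lt hk) (fun s' hs' k hk ↦ (ih s' hs' k hk).2)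
        (fun k ↦ hR.cellColumn_le_col hA ih) (cellColumn_spec hk).1] at hmem
      exact (Finset.mem_filter.1 hmem).2
    exact ⟨hR.level_eq hC (fun k ↦ hR.colPrefix_le_level ih) hle hk, hC k hk⟩

end RivalFilling

end Pictures

section Enumerations

lemma eq_of_map_eq_of_sum_le {α β : Type*} {S S₀ : Finset α} (κ : α → β)
    (ρ : α → ℕ) (hS₀ : ∀ x ∈ S₀, ∀ y, y ∉ S₀ → κ x = κ y → ρ x < ρ y)
    (hκ : S.val.map κ = S₀.val.map κ) (hρ : ∑ x ∈ S, ρ x ≤ ∑ x ∈ S₀, ρ x) : S = S₀ := by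
  classical
  let bound : β → ℕ := fun p ↦ {x ∈ S₀ | κ x = p}.sup fun x ↦ ρ x + 1
  let excess : α → ℤ := fun x ↦ ρ x - bound (κ x)
  have hneg : ∀ x ∈ S₀, excess x < 0 := fun x hx ↦ by
    have : ρ x + 1 ≤ bound (κ x) :=
      Finset.le_sup (f := fun x ↦ ρ x + 1) (Finset.mem_filter.2 ⟨hx, rfl⟩)
    simp only [excess]
    omega
  have hnonneg : ∀ y, y ∉ S₀ → 0 ≤ excess y := fun y hy ↦ by
    have : bound (κ y) ≤ ρ y := Finset.sup_le fun x hx ↦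
      hS₀ x (Finset.mem_filter.1 hx).1 y hy (Finset.mem_filter.1 hx).2
    simp only [excess]
    omega
  have hbound : ∑ x ∈ S, (bound (κ x) : ℤ) = ∑ x ∈ S₀, (bound (κ x) : ℤ) := by
    simpa only [Finset.sum, Multiset.map_map, Function.comp_def] using
      congrArg (fun m : Multiset β ↦ (m.map fun p ↦ (bound p : ℤ)).sum) hκ
  have hle : ∑ x ∈ S, excess x ≤ ∑ x ∈ S₀, excess x := by
    have : ∑ x ∈ S, (ρ x : ℤ) ≤ ∑ x ∈ S₀, (ρ x : ℤ) := by exact_mod_cast hρ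
    simp only [excess, Finset.sum_sub_distrib, hbound]
    omega
  have hcard : S.card = S₀.card := by simpa using congrArg Multiset.card hκ
  suffices S₀ ⊆ S from (Finset.eq_of_subset_of_card_le this hcard.le).symm
  by_contra hsub
  have h₁ := Finset.sum_inter_add_sum_sdiff S S₀ excess
  have h₂ := Finset.sum_inter_add_sum_sdiff S₀ S excess
  have h₃ : 0 ≤ ∑ x ∈ S \ S₀, excess x :=
    Finset.sum_nonneg fun x hx ↦ hnonneg x (Finset.mem_sdiff.1 hx).2
  have h₄ : ∑ x ∈ S₀ \ S, excess x < 0 :=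
    Finset.sum_neg (fun x hx ↦ hneg x (Finset.mem_sdiff.1 hx).1) (Finset.sdiff_nonempty.2 hsub)
  rw [Finset.inter_comm] at h₂
  omega

variable {d n D M : ℕ} {A : ℕ → ℕ → ℕ} {g h h₀ : Fin d × Fin n → Fin D × Fin M}

/-- For a map `h` from positions to cells, the number of positions of level `l` sent to a cell of
column index `k` in a row of the block `i`, where a block consists of `n` consecutive rows. -/
def blockCount (h : Fin d × Fin n → Fin D × Fin M) (i k l : ℕ) : ℕ :=
  Finset.card {x | (h x).2.val / n = i ∧ (h x).1.val = k ∧ x.1.val = l}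

/-- For a map `h` from positions to cells, the number of positions in column `c` sent to row `s`. -/
def letterCount (h : Fin d × Fin n → Fin D × Fin M) (s c : ℕ) : ℕ :=
  Finset.card {x | (h x).2.val = s ∧ x.2.val = c}

/-- The map `h` is a bijection from the `d × n` rectangle of positions onto the diagram of `A`. -/
structure IsDiagramEnumeration (A : ℕ → ℕ → ℕ) (h : Fin d × Fin n → Fin D × Fin M) : Prop where
  injective : h.Injective
  mem : ∀ x, (h x).1.val < rowPrefix A (h x).2.val n
  surjective : ∀ k s, k < rowPrefix A s n → ∃ x, (h x).1.val = k ∧ (h x).2.val = s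

/-- The map `h` is the inverse of the filling `(cellLevel A, cellColumn A)` of the diagram. -/
structure IsStandardEnumeration (A : ℕ → ℕ → ℕ) (h : Fin d × Fin n → Fin D × Fin M) : Prop
    extends IsDiagramEnumeration A h where
  level_eq : ∀ x, cellLevel A (h x).1.val (h x).2.val = x.1.val
  col_eq : ∀ x, cellColumn A (h x).1.val (h x).2.val = x.2.val

lemma IsDiagramEnumeration.card_filter_level_eq (hh : IsDiagramEnumeration A h) {L : ℕ → ℕ → ℕ}
    (hL : ∀ x, L (h x).1.val (h x).2.val = x.1.val) (i k l : ℕ) :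
    {s ∈ Finset.range M | s / n = i ∧ k < rowPrefix A s n ∧ L k s = l}.card =
      blockCount h i k l := by
  symm
  refine Finset.card_bij (fun x _ ↦ (h x).2.val) (fun x hx ↦ ?_) (fun x hx y hy hxy ↦ ?_)
    fun s hs ↦ ?_
  · obtain ⟨hi, rfl, hl⟩ := (Finset.mem_filter.1 hx).2
    exact Finset.mem_filter.2 ⟨Finset.mem_range.2 (h x).2.2, hi, hh.mem x, (hL x).trans hl⟩
  · have hk := (Finset.mem_filter.1 hx).2.2.1.trans (Finset.mem_filter.1 hy).2.2.1.symm
    exact hh.injective (Prod.ext (Fin.ext hk) (Fin.ext hxy))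
  · obtain ⟨-, hi, hk, hl⟩ := Finset.mem_filter.1 hs
    obtain ⟨x, rfl, rfl⟩ := hh.surjective k s hk
    exact ⟨x, Finset.mem_filter.2 ⟨Finset.mem_univ x, hi, rfl, (hL x).symm.trans hl⟩, rfl⟩

lemma IsDiagramEnumeration.card_filter_col_eq (hh : IsDiagramEnumeration A h) {C : ℕ → ℕ → ℕ}
    (hC : ∀ x, C (h x).1.val (h x).2.val = x.2.val) (s c : ℕ) :
    {k ∈ Finset.range (rowPrefix A s n) | C k s = c}.card = letterCount h s c := by
  symm
  refine Finset.card_bij (fun x _ ↦ (h x).1.val) (fun x hx ↦ ?_) (fun x hx y hy hxy ↦ ?_)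
    fun k hk ↦ ?_
  · obtain ⟨rfl, hc⟩ := (Finset.mem_filter.1 hx).2
    exact Finset.mem_filter.2 ⟨Finset.mem_range.2 (hh.mem x), (hC x).trans hc⟩
  · have hs := (Finset.mem_filter.1 hx).2.1.trans (Finset.mem_filter.1 hy).2.1.symm
    exact hh.injective (Prod.ext (Fin.ext hxy) (Fin.ext hs))
  · obtain ⟨hk, hc⟩ := Finset.mem_filter.1 hk
    obtain ⟨x, rfl, rfl⟩ := hh.surjective k s (Finset.mem_range.1 hk)
    exact ⟨x, Finset.mem_filter.2 ⟨Finset.mem_univ x, rfl, (hC x).symm.trans hc⟩, rfl⟩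

lemma IsDiagramEnumeration.exists_filling (hh : IsDiagramEnumeration A h) :
    ∃ L C : ℕ → ℕ → ℕ, ∀ x, L (h x).1.val (h x).2.val = x.1.val ∧
      C (h x).1.val (h x).2.val = x.2.val := by
  let cell : Fin d × Fin n → ℕ × ℕ := fun x ↦ ((h x).1.val, (h x).2.val)
  have hcell : cell.Injective := fun x y hxy ↦
    hh.injective (Prod.ext (Fin.ext (congrArg Prod.fst hxy)) (Fin.ext (congrArg Prod.snd hxy)))
  exact ⟨fun k s ↦ Function.extend cell (fun x ↦ x.1.val) 0 (k, s),
    fun k s ↦ Function.extend cell (fun x ↦ x.2.val) 0 (k, s),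
    fun x ↦ ⟨hcell.extend_apply _ _ x, hcell.extend_apply _ _ x⟩⟩

lemma IsStandardEnumeration.letterCount_eq (hh : IsStandardEnumeration A h) (s : ℕ) {c : ℕ}
    (hc : c < n) : letterCount h s c = A s c := by
  rw [← hh.card_filter_col_eq hh.col_eq, card_filter_cellColumn_eq A s hc]

lemma PictureTable.exists_isStandardEnumeration {block : ℕ → ℕ} (hA : PictureTable A n M d block)
    (hD : ∀ s, rowPrefix A s n ≤ D) :
    ∃ h : Fin d × Fin n → Fin D × Fin M, IsStandardEnumeration A h := by
  have hex : ∀ x : Fin d × Fin n, ∃ r : Fin D × Fin M, r.1.val < rowPrefix A r.2.val n ∧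
      cellLevel A r.1.val r.2.val = x.1.val ∧ cellColumn A r.1.val r.2.val = x.2.val := fun x ↦ by
    obtain ⟨s, hs, k, hk, hx⟩ :=
      exists_cell_of_lt_colPrefix x.2.2 (x.1.2.trans_eq (hA.colPrefix_eq _ x.2.2).symm)
    exact ⟨(⟨k, hk.trans_le (hD s)⟩, ⟨s, hs⟩), hk, hx⟩
  choose h hmem hlevel hcol using hex
  refine ⟨h, ⟨fun x y hxy ↦ ?_, hmem, fun k s hk ↦ ?_⟩, hlevel, hcol⟩
  · ext
    · rw [← hlevel, ← hlevel, hxy]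
    · rw [← hcol, ← hcol, hxy]
  · refine ⟨(⟨cellLevel A k s, hA.cellLevel_lt hk⟩, ⟨cellColumn A k s, (cellColumn_spec hk).1⟩), ?_⟩
    exact (cell_injective (hmem _) hk (hlevel _) (hcol _)).symm

lemma IsDiagramEnumeration.eq_of_rival {block : ℕ → ℕ} (hh : IsDiagramEnumeration A h)
    (hA : PictureTable A n M d block) (hh₀ : IsStandardEnumeration A h₀) {L C : ℕ → ℕ → ℕ}
    (hLC : ∀ x, L (h x).1.val (h x).2.val = x.1.val ∧ C (h x).1.val (h x).2.val = x.2.val)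
    (hR : RivalFilling A n M block L C) : h = h₀ := by
  funext x
  obtain ⟨hL, hC⟩ := hR.eq_cell hA (hh.mem x)
  obtain ⟨hs, hk⟩ := cell_injective (hh.mem x) (hh₀.mem x)
    (by rw [← hL, (hLC x).1, hh₀.level_eq]) (by rw [← hC, (hLC x).2, hh₀.col_eq])
  exact Prod.ext (Fin.ext hk) (Fin.ext hs)

theorem IsDiagramEnumeration.eq_of_blockCount_eq (hh : IsDiagramEnumeration A h)
    (hA : PictureTable A n M d (· / n)) (hh₀ : IsStandardEnumeration A h₀)
    (hblock : ∀ i k l, blockCount h i k l = blockCount h₀ i k l)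
    (hlex : ∀ s < M, (∀ s' < s, ∀ c < n, letterCount h s' c = A s' c) →
      ∀ c < n, (∀ c' < c, letterCount h s c' = A s c') → A s c ≤ letterCount h s c) : h = h₀ := by
  obtain ⟨L, C, hLC⟩ := hh.exists_filling
  refine hh.eq_of_rival hA hh₀ hLC ⟨fun k s k' s' hk hk' hL hC ↦ ?_, fun k s hk ↦ ?_,
    fun i k l ↦ ?_, ?_⟩
  · obtain ⟨x, rfl, rfl⟩ := hh.surjective k s hk
    obtain ⟨y, rfl, rfl⟩ := hh.surjective k' s' hk'
    rw [(hLC x).1, (hLC y).1] at hL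
    rw [(hLC x).2, (hLC y).2] at hC
    obtain rfl : x = y := Prod.ext (Fin.ext hL) (Fin.ext hC)
    exact ⟨rfl, rfl⟩
  · obtain ⟨x, rfl, rfl⟩ := hh.surjective k s hk
    exact (hLC x).2.trans_lt x.2.2
  · rw [hh.card_filter_level_eq fun x ↦ (hLC x).1, hh₀.card_filter_level_eq hh₀.level_eq, hblock]
  · simpa only [hh.card_filter_col_eq fun x ↦ (hLC x).2] using hlex

lemma map_blockClass_eq (hblock : ∀ i k l, blockCount g i k l = blockCount h i k l) :
    (Finset.univ.val.map fun x ↦ ((g x).2.val / n, (g x).1.val)) =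
      Finset.univ.val.map fun x ↦ ((h x).2.val / n, (h x).1.val) := by
  have key : (Finset.univ.val.map fun x ↦ ((g x).2.val / n, (g x).1.val, x.1.val)) =
      Finset.univ.val.map fun x ↦ ((h x).2.val / n, (h x).1.val, x.1.val) := by
    refine Multiset.ext.2 fun ⟨i, k, l⟩ ↦ ?_
    simpa only [blockCount, Multiset.count_map, Finset.card_def, Finset.filter_val, Prod.mk.injEq,
      eq_comm (a := i), eq_comm (a := k), eq_comm (a := l)] using hblock i k l
  simpa only [Finset.sum, Multiset.map_map, Function.comp_def] using
    congrArg (Multiset.map fun p : ℕ × ℕ × ℕ ↦ (p.1, p.2.1)) key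

theorem IsDiagramEnumeration.of_blockCount_eq (hh₀ : IsDiagramEnumeration A h₀)
    (hA : PictureTable A n M d (· / n)) (hh : h.Injective)
    (hblock : ∀ i k l, blockCount h i k l = blockCount h₀ i k l)
    (hweight : ∑ x, (h x).2.val % n ≤ ∑ x, (h₀ x).2.val % n) : IsDiagramEnumeration A h := by
  have mem_image₀ (r : Fin D × Fin M) :
      r ∈ Finset.univ.image h₀ ↔ r.1.val < rowPrefix A r.2.val n := by
    refine Finset.mem_image.trans ⟨?_, fun hr ↦ ?_⟩
    · rintro ⟨x, -, rfl⟩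
      exact hh₀.mem x
    · obtain ⟨x, hk, hs⟩ := hh₀.surjective _ _ hr
      exact ⟨x, Finset.mem_univ x, Prod.ext (Fin.ext hk) (Fin.ext hs)⟩
  have himage : Finset.univ.image h = Finset.univ.image h₀ := by
    refine eq_of_map_eq_of_sum_le (fun r ↦ (r.2.val / n, r.1.val)) (fun r ↦ r.2.val % n)
      (fun r hr r' hr' hclass ↦ ?_) ?_ ?_
    · obtain ⟨hdiv, hk⟩ := Prod.mk.inj hclass
      rw [mem_image₀] at hr hr'
      by_contra! hle
      have hrow : r'.2.val ≤ r.2.val := by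
        rw [← Nat.div_add_mod r'.2.val n, ← Nat.div_add_mod r.2.val n, hdiv]
        exact Nat.add_le_add_left hle _
      exact hr' (hk ▸ hr.trans_le (hA.rowLength_anti hrow r.2.2 hdiv.symm))
    · rw [Finset.image_val_of_injOn hh.injOn, Finset.image_val_of_injOn hh₀.injective.injOn]
      simpa only [Multiset.map_map, Function.comp_def] using map_blockClass_eq hblock
    · rwa [Finset.sum_image hh.injOn, Finset.sum_image hh₀.injective.injOn]
  refine ⟨hh, fun x ↦ ?_, fun k s hk ↦ ?_⟩
  · rw [← mem_image₀, ← himage]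
    exact Finset.mem_image_of_mem h (Finset.mem_univ x)
  · obtain ⟨x₀, rfl, rfl⟩ := hh₀.surjective k s hk
    have hmem := Finset.mem_image_of_mem h₀ (Finset.mem_univ x₀)
    obtain ⟨x, -, hx⟩ := Finset.mem_image.1 (himage ▸ hmem)
    exact ⟨x, by rw [hx], by rw [hx]⟩

end Enumerations

section Elimination

variable {E P : Type*} [Ring E] [Monoid P] {G : ℕ → Set E} {D g : ℕ}

/-- The sums of elements of degree at least `g`, where `G i` is the set of elements of
degree `i`. -/
def degreeAtLeast (G : ℕ → Set E) (g : ℕ) : AddSubmonoid E :=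
  AddSubmonoid.closure (⋃ i ≥ g, G i)

lemma antitone_degreeAtLeast (G : ℕ → Set E) : Antitone (degreeAtLeast G) := fun _ _ h ↦
  AddSubmonoid.closure_mono <| Set.biUnion_mono (fun _ hi ↦ h.trans hi) fun _ _ ↦ le_rfl

lemma mem_degreeAtLeast {i : ℕ} (hi : g ≤ i) {a : E} (ha : a ∈ G i) : a ∈ degreeAtLeast G g :=
  AddSubmonoid.subset_closure <| Set.mem_biUnion hi ha

lemma degreeAtLeast_le_sup (G : ℕ → Set E) (g : ℕ) :
    degreeAtLeast G g ≤ AddSubmonoid.closure (G g) ⊔ degreeAtLeast G (g + 1) := by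
  refine (AddSubmonoid.closure_le).2 <| Set.iUnion₂_subset fun i hi a ha ↦ ?_
  obtain rfl | hi := hi.eq_or_lt
  · exact AddSubmonoid.mem_sup_left (AddSubmonoid.subset_closure ha)
  · exact AddSubmonoid.mem_sup_right (mem_degreeAtLeast hi ha)

lemma eq_zero_of_mem_degreeAtLeast (hzero : ∀ i > D, G i ⊆ {0}) (hg : D < g) {w : E}
    (hw : w ∈ degreeAtLeast G g) : w = 0 := by
  have hle : degreeAtLeast G g ≤ ⊥ :=
    (AddSubmonoid.closure_le).2 <| Set.iUnion₂_subset fun i hi ↦ hzero i (hg.trans_le hi)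
  exact hle hw

lemma mul_mem_degreeAtLeast (hmul : ∀ i j, ∀ a ∈ G i, ∀ b ∈ G j, a * b ∈ G (i + j))
    {i : ℕ} {a w : E} (ha : a ∈ G i) (hw : w ∈ degreeAtLeast G g) :
    a * w ∈ degreeAtLeast G (g + i) := by
  have hle : degreeAtLeast G g ≤ (degreeAtLeast G (g + i)).comap (AddMonoidHom.mulLeft a) := by
    refine (AddSubmonoid.closure_le).2 <| Set.iUnion₂_subset fun j hj b hb ↦ ?_
    exact mem_degreeAtLeast (by grind) (hmul i j a ha b hb)
  exact hle hw

lemma pow_mul_mem_degreeAtLeast (hmul : ∀ i j, ∀ a ∈ G i, ∀ b ∈ G j, a * b ∈ G (i + j))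
    {i : ℕ} {a w : E} (ha : a ∈ G i) (hw : w ∈ degreeAtLeast G g) (k : ℕ) :
    a ^ k * w ∈ degreeAtLeast G (g + k * i) := by
  induction k with
  | zero => simpa using hw
  | succ k ih =>
    rw [pow_succ', mul_assoc, add_one_mul, ← add_assoc]
    exact mul_mem_degreeAtLeast hmul ha ih

lemma one_sub_mul_one_sub_geom_sum_mul {a w : E} {k : ℕ} (h : a ^ (k + 1) * w = 0) :
    (1 - a) * (1 - (w + ∑ i ∈ Finset.range k, a ^ (i + 1) * w)) = 1 - (a + w) := by
  have hsum : w + ∑ i ∈ Finset.range k, a ^ (i + 1) * w =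
      (∑ i ∈ Finset.range (k + 1), a ^ i) * w := by
    rw [Finset.sum_range_succ', pow_zero, add_mul, one_mul, add_comm, Finset.sum_mul]
  rw [hsum, mul_sub, mul_one, ← mul_assoc, mul_neg_geom_sum, sub_mul, one_mul, h]
  abel

/-- Splitting off one summand of lowest degree from `1 - w` leaves a factor with one summand of
that degree less, at the price of new summands of higher degree. -/
theorem map_one_sub_mem_of_mem_degreeAtLeast (δ : E →* P) (T : Submonoid P)
    (hmul : ∀ i j, ∀ a ∈ G i, ∀ b ∈ G j, a * b ∈ G (i + j)) (hzero : ∀ i > D, G i ⊆ {0})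
    (hT : ∀ i, ∀ a ∈ G i, δ (1 - a) ∈ T) (hg : 1 ≤ g) {w : E} (hw : w ∈ degreeAtLeast G g) :
    δ (1 - w) ∈ T := by
  induction hn : D + 1 - g generalizing g w with
  | zero =>
    rw [eq_zero_of_mem_degreeAtLeast hzero (by omega) hw, sub_zero, map_one]
    exact T.one_mem
  | succ n ih =>
    obtain ⟨u, hu, v, hv, rfl⟩ := AddSubmonoid.mem_sup.1 (degreeAtLeast_le_sup G g hw)
    clear hw
    induction hu using AddSubmonoid.closure_induction_left generalizing v with
    | zero =>
      rw [zero_add]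
      exact ih (by omega) hv (by omega)
    | add_left a ha u hu ihu =>
      have huv : u + v ∈ degreeAtLeast G g := add_mem
        (AddSubmonoid.closure_mono (Set.subset_biUnion_of_mem (u := G) (Set.mem_Ici.2 le_rfl)) hu)
        (antitone_degreeAtLeast G g.le_succ hv)
      have hnil : a ^ (D + 1) * (u + v) = 0 :=
        eq_zero_of_mem_degreeAtLeast hzero (by nlinarith) (pow_mul_mem_degreeAtLeast hmul ha huv _)
      have hhigh : ∑ i ∈ Finset.range D, a ^ (i + 1) * (u + v) ∈ degreeAtLeast G (g + 1) :=
        sum_mem fun i _ ↦ antitone_degreeAtLeast G (by nlinarith)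
          (pow_mul_mem_degreeAtLeast hmul ha huv (i + 1))
      rw [add_assoc, ← one_sub_mul_one_sub_geom_sum_mul hnil, map_mul, add_assoc u v]
      exact T.mul_mem (hT g a ha) (ihu _ (add_mem hv hhigh))

end Elimination

section CharpolyRev

open Polynomial hiding X C
open Polynomial renaming X → pX, C → pC

variable {R Q N N' : Type*} [CommRing R] [CommRing Q] [Fintype N] [DecidableEq N] [Fintype N']
  [DecidableEq N']

lemma det_one_sub_smul_map (φ : R →+* Q) (t : Q) (W : Matrix N N R) :
    (1 - t • W.map φ).det = W.charpolyRev.eval₂ φ t := by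
  rw [charpolyRev, ← coe_eval₂RingHom, RingHom.map_det]
  congr 1
  ext i j
  obtain rfl | hij := eq_or_ne i j <;> simp [*, mul_comm t]

lemma charpolyRev_map (φ : R →+* Q) (W : Matrix N N R) :
    (W.map φ).charpolyRev = W.charpolyRev.map φ := by
  rw [charpolyRev, Matrix.map_map]
  exact det_one_sub_smul_map (pC.comp φ) pX W

lemma coeff_charpolyRev_smul (r : R) (W : Matrix N N R) (k : ℕ) :
    (r • W).charpolyRev.coeff k = r ^ k * W.charpolyRev.coeff k := by
  have hcomp : (r • W).charpolyRev = W.charpolyRev.comp (pC r * pX) := by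
    rw [charpolyRev, Polynomial.comp, ← det_one_sub_smul_map, Matrix.map_smul' _ _ _ (map_mul _),
      smul_smul, mul_comm pX]
  rw [hcomp, comp_C_mul_X_coeff, mul_comm]

lemma charpolyRev_mul_comm (U : Matrix N N' R) (V : Matrix N' N R) :
    (U * V).charpolyRev = (V * U).charpolyRev := by
  rw [charpolyRev, charpolyRev, Matrix.map_mul, Matrix.map_mul, ← Matrix.smul_mul,
    det_one_sub_mul_comm, Matrix.mul_smul]

lemma coeff_charpolyRev_card [Nontrivial R] (W : Matrix N N R) :
    W.charpolyRev.coeff (Fintype.card N) = W.charpoly.coeff 0 := by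
  rw [← reverse_charpoly, coeff_reverse, charpoly_natDegree_eq_dim, revAt_le le_rfl, Nat.sub_self]

lemma charpolyRev_coeff_mem_of_charpoly_coeff_mem {S : Subring R} {W : Matrix N N R}
    (hW : ∀ k, W.charpoly.coeff k ∈ S) (k : ℕ) : W.charpolyRev.coeff k ∈ S := by
  cases subsingleton_or_nontrivial R
  · rw [Subsingleton.elim (W.charpolyRev.coeff k) 0]
    exact zero_mem S
  rw [← reverse_charpoly, coeff_reverse]
  exact hW _

variable {S : Subring R} {M : Subsemigroup (Matrix N N R)}

lemma det_one_sub_smul_map_mem_of_mem_closure [Algebra R Q]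
    (hS : ∀ a ∈ M, ∀ k, a.charpolyRev.coeff k ∈ S) {t : Q} (ht : IsNilpotent t) {W : Matrix N N R}
    (hW : W ∈ AddSubmonoid.closure (M : Set (Matrix N N R))) :
    (1 - t • W.map (algebraMap R Q)).det ∈
      (lifts S.subtype).toSubmonoid.map (aeval (R := R) t : R[X] →* Q) := by
  obtain ⟨D, hD⟩ := ht
  let φ : Matrix N N R →+* Matrix N N Q := (algebraMap R Q).mapMatrix
  let G : ℕ → Set (Matrix N N Q) := fun i ↦ (fun a ↦ t ^ i • φ a) '' M
  have hmem : t • φ W ∈ degreeAtLeast G 1 := by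
    have hle : AddSubmonoid.closure (M : Set (Matrix N N R)) ≤ (degreeAtLeast G 1).comap
        ((DistribSMul.toAddMonoidHom _ t).comp φ.toAddMonoidHom) :=
      AddSubmonoid.closure_le.2 fun a ha ↦
        mem_degreeAtLeast le_rfl ⟨a, ha, by simp⟩
    exact hle hW
  refine map_one_sub_mem_of_mem_degreeAtLeast (G := G) (D := D) detMonoidHom _ ?_ ?_ ?_ le_rfl hmem
  · rintro i j _ ⟨a, ha, rfl⟩ _ ⟨b, hb, rfl⟩
    exact ⟨a * b, M.mul_mem ha hb, by
      simp only [map_mul, smul_mul_smul_comm, pow_add]⟩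
  · rintro i hi _ ⟨a, -, rfl⟩
    simp [pow_eq_zero_of_le hi.le hD]
  · rintro i _ ⟨a, ha, rfl⟩
    obtain ⟨p, hp⟩ : a.charpolyRev ∈ lifts S.subtype :=
      (lifts_iff_coeff_lifts _).2 fun k ↦ ⟨⟨_, hS a ha k⟩, rfl⟩
    refine ⟨Polynomial.expand R i a.charpolyRev, ⟨Polynomial.expand S i p, ?_⟩, ?_⟩
    · rw [← hp, coe_mapRingHom, Polynomial.map_expand]
    · exact (Polynomial.expand_aeval i _ t).trans (det_one_sub_smul_map _ _ _).symm

/-- **Amitsur.** -/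
theorem charpolyRev_coeff_mem_of_mem_closure (hS : ∀ a ∈ M, ∀ k, a.charpolyRev.coeff k ∈ S)
    {W : Matrix N N R} (hW : W ∈ AddSubmonoid.closure (M : Set (Matrix N N R))) (k : ℕ) :
    W.charpolyRev.coeff k ∈ S := by
  let t := AdjoinRoot.root (pX ^ (k + 1) : R[X])
  have ht : IsNilpotent t := ⟨k + 1, by
    rw [show t = _ from AdjoinRoot.mk_X.symm, ← map_pow, AdjoinRoot.mk_self]⟩
  obtain ⟨p, hp, hpW⟩ := det_one_sub_smul_map_mem_of_mem_closure hS ht hW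
  have hdvd : pX ^ (k + 1) ∣ p - W.charpolyRev := by
    rw [← AdjoinRoot.mk_eq_mk, ← AdjoinRoot.aeval_eq, ← AdjoinRoot.aeval_eq]
    exact hpW.trans (det_one_sub_smul_map _ _ _)
  have hcoeff := X_pow_dvd_iff.1 hdvd k k.lt_succ_self
  rw [Polynomial.coeff_sub, sub_eq_zero] at hcoeff
  obtain ⟨s, hs⟩ := (lifts_iff_coeff_lifts p).1 hp k
  exact hcoeff ▸ hs ▸ s.2

lemma det_mem_of_charpolyRev_coeff_mem {W : Matrix N N R}
    (hW : ∀ k, W.charpolyRev.coeff k ∈ S) : W.det ∈ S := by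
  nontriviality R
  rw [det_eq_sign_charpoly_coeff, ← coeff_charpolyRev_card]
  exact S.mul_mem (S.pow_mem (S.neg_mem S.one_mem) _) (hW _)

end CharpolyRev

section KroneckerPencil

open scoped Kronecker

variable {R L N : Type*} [CommRing R] [Fintype L] [DecidableEq L] [Fintype N] [DecidableEq N]

lemma charpolyRev_single_kronecker (l l' : L) (c : R) (W : Matrix N N R) :
    (single l l' c ⊗ₖ W).charpolyRev = ((if l = l' then c else 0) • W).charpolyRev := by
  let U : Matrix (L × N) N R := of fun x j ↦ if l = x.1 then c * W x.2 j else 0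
  let V : Matrix N (L × N) R := of fun i y ↦ if l' = y.1 then (1 : Matrix N N R) i y.2 else 0
  have hUV : U * V = single l l' c ⊗ₖ W := by
    ext x y
    by_cases hx : l = x.1 <;> by_cases hy : l' = y.1 <;>
      simp [U, V, mul_apply, one_apply, hx, hy]
  have hVU : V * U = (if l = l' then c else 0) • W := by
    ext i j
    obtain rfl | h := eq_or_ne l l'
    · simp [U, V, mul_apply, Fintype.sum_prod_type, one_apply]
    · simp [U, V, mul_apply, Fintype.sum_prod_type, h, h.symm]
  rw [← hUV, charpolyRev_mul_comm, hVU]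

/-- The matrices `c e_{l l'} ⊗ W` with `c ∈ S` and `W ∈ T`. -/
def singleKronecker (L : Type*) [Fintype L] [DecidableEq L] (S : Subring R)
    (T : Submonoid (Matrix N N R)) : Subsemigroup (Matrix (L × N) (L × N) R) where
  carrier := {Z | ∃ l l', ∃ c ∈ S, ∃ W ∈ T, single l l' c ⊗ₖ W = Z}
  mul_mem' := by
    rintro _ _ ⟨k, k', c, hc, W, hW, rfl⟩ ⟨l, l', c', hc', W', hW', rfl⟩
    rw [← mul_kronecker_mul]
    obtain rfl | h := eq_or_ne k' l
    · exact ⟨k, l', _, S.mul_mem hc hc', _, T.mul_mem hW hW', by rw [single_mul_single_same]⟩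
    · exact ⟨k, l', 0, S.zero_mem, _, T.mul_mem hW hW', by
        rw [single_mul_single_of_ne _ _ _ _ h, single_zero]⟩

theorem det_sum_kronecker_mem {S : Subring R} {T : Submonoid (Matrix N N R)}
    (hT : ∀ W ∈ T, ∀ k, W.charpolyRev.coeff k ∈ S) {J : Type*} (s : Finset J)
    {U : J → Matrix L L R} (hU : ∀ j l l', U j l l' ∈ S) {Y : J → Matrix N N R}
    (hY : ∀ j, Y j ∈ T) : (∑ j ∈ s, U j ⊗ₖ Y j).det ∈ S := by
  refine det_mem_of_charpolyRev_coeff_mem <|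
    charpolyRev_coeff_mem_of_mem_closure (M := singleKronecker L S T) ?_ ?_
  · rintro _ ⟨l, l', c, hc, W, hW, rfl⟩ k
    rw [charpolyRev_single_kronecker, coeff_charpolyRev_smul]
    split_ifs
    · exact S.mul_mem (S.pow_mem hc k) (hT W hW k)
    · exact S.mul_mem (S.pow_mem S.zero_mem k) (hT W hW k)
  · refine sum_mem fun j _ ↦ ?_
    have hsum : U j ⊗ₖ Y j = ∑ l, ∑ l', single l l' (U j l l') ⊗ₖ Y j := by
      conv_lhs => rw [matrix_eq_sum_single (U j)]
      ext x y
      simp [Matrix.sum_apply, Finset.sum_mul]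
    rw [hsum]
    exact sum_mem fun l _ ↦ sum_mem fun l' _ ↦
      AddSubmonoid.subset_closure ⟨l, l', _, hU j l l', _, hY j, rfl⟩

variable {A B : Type*} [CommRing A] [CommRing B] {r D d : ℕ}

/-- Variables `u_{p,k}` (first component `false`) and `v_{p,k}` (first component `true`), where `p`
consists of the index of one of `r` matrices and of a number below `D`. -/
abbrev PencilVar (r D d : ℕ) : Type := Bool × (Fin r × Fin D) × Fin d

/-- The matrix `∑ p, u_p v_pᵀ ⊗ Y p.1`, a sum of `D` general rank-one matrices tensored with
each `Y i`. -/
noncomputable def pencil (D d : ℕ) (Y : Fin r → Matrix N N A) :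
    Matrix (Fin d × N) (Fin d × N) (MvPolynomial (PencilVar r D d) A) :=
  ∑ p : Fin r × Fin D,
    vecMulVec (fun k ↦ X (false, p, k)) (fun k ↦ X (true, p, k)) ⊗ₖ (Y p.1).map C

/-- The coefficients of the determinant of `pencil D d Y`; those of the generic tuple span the
semi-invariants of weight `d`. -/
noncomputable def pencilDetCoeff (D d : ℕ) (β : PencilVar r D d →₀ ℕ)
    (Y : Fin r → Matrix N N A) : A :=
  (pencil D d Y).det.coeff β

lemma pencil_apply {N : Type*} (Y : Fin r → Matrix N N A) (x y : Fin d × N) :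
    pencil D d Y x y =
      ∑ p : Fin r × Fin D, X (false, p, x.1) * X (true, p, y.1) * C (Y p.1 x.2 y.2) := by
  simp [pencil, Matrix.sum_apply, vecMulVec_apply]

lemma map_pencilDetCoeff (φ : A →+* B) (β : PencilVar r D d →₀ ℕ) (Y : Fin r → Matrix N N A) :
    φ (pencilDetCoeff D d β Y) = pencilDetCoeff D d β fun i ↦ (Y i).map φ := by
  rw [pencilDetCoeff, ← coeff_map, RingHom.map_det, pencilDetCoeff]
  congr 2
  ext1 x y
  simp [pencil_apply]

lemma pencil_mul_mul {N : Type*} [Fintype N] (P Q : Matrix N N A) (Y : Fin r → Matrix N N A) :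
    pencil D d (fun i ↦ P * Y i * Q) =
      (1 ⊗ₖ P.map C) * pencil D d Y * (1 ⊗ₖ Q.map C) := by
  simp only [pencil, Finset.mul_sum, Finset.sum_mul, ← mul_kronecker_mul, Matrix.map_mul,
    Matrix.one_mul, Matrix.mul_one]

lemma pencilDetCoeff_mul_mul (β : PencilVar r D d →₀ ℕ) (P Q : Matrix N N A)
    (Y : Fin r → Matrix N N A) :
    pencilDetCoeff D d β (fun i ↦ P * Y i * Q) =
      (P.det * Q.det) ^ d * pencilDetCoeff D d β Y := by
  have hdet (R : Matrix N N A) :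
      (1 ⊗ₖ R.map C : Matrix (Fin d × N) (Fin d × N) (MvPolynomial (PencilVar r D d) A)).det =
        C (R.det ^ d) := by
    have hmap : (R.map C).det = C (σ := PencilVar r D d) R.det := (RingHom.map_det C R).symm
    rw [det_kronecker, det_one, one_pow, one_mul, Fintype.card_fin, hmap, C_pow]
  rw [pencilDetCoeff, pencil_mul_mul, det_mul, det_mul, hdet, hdet, mul_right_comm, ← C_mul,
    coeff_C_mul, ← mul_pow, pencilDetCoeff]

theorem pencilDetCoeff_mem {S : Subring A} {Y : Fin r → Matrix N N A}
    (hS : ∀ W ∈ Submonoid.closure (Set.range Y), ∀ k, W.charpolyRev.coeff k ∈ S)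
    (β : PencilVar r D d →₀ ℕ) : pencilDetCoeff D d β Y ∈ S := by
  let T : Submonoid (Matrix N N (MvPolynomial (PencilVar r D d) A)) :=
    (Submonoid.closure (Set.range Y)).map (C (σ := PencilVar r D d)).mapMatrix
  have hT : ∀ W ∈ T, ∀ k, W.charpolyRev.coeff k ∈
      (map (σ := PencilVar r D d) S.subtype).range := by
    rintro _ ⟨W, hW, rfl⟩ k
    refine ⟨C ⟨_, hS W hW k⟩, ?_⟩
    rw [map_C, RingHom.mapMatrix_apply, charpolyRev_map, Polynomial.coeff_map, S.subtype_apply]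
  obtain ⟨p, hp⟩ := det_sum_kronecker_mem hT Finset.univ
    (U := fun p : Fin r × Fin D ↦ vecMulVec (fun k ↦ X (false, p, k)) (fun k ↦ X (true, p, k)))
    (fun p l l' ↦ ⟨X (false, p, l) * X (true, p, l'), by simp [vecMulVec_apply]⟩)
    (fun p ↦ Submonoid.mem_map_of_mem _ (Submonoid.subset_closure ⟨p.1, rfl⟩))
  have hdet : MvPolynomial.map S.subtype p = (pencil D d Y).det := hp
  rw [pencilDetCoeff, ← hdet, coeff_map]
  exact (p.coeff β).2

end KroneckerPencil

section Weights

open scoped Polynomial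

variable {K A ι σ : Type*} [CommRing K] [CommRing A] [Algebra K A]

lemma algHom_aeval_eq_eval (φ : A →ₐ[K] K) (p : ι → A) (F : MvPolynomial ι K) :
    φ (aeval p F) = eval (fun i ↦ φ (p i)) F := by
  rw [comp_aeval_apply, aeval_eq_eval]

lemma eval_aeval (v : ι → K) (p : σ → MvPolynomial ι K) (F : MvPolynomial σ K) :
    eval v (aeval p F) = eval (fun i ↦ eval v (p i)) F := by
  simpa only [aeval_eq_eval] using algHom_aeval_eq_eval (aeval v) p F

lemma polynomial_eval_aeval (η : K) (p : ι → K[X]) (F : MvPolynomial ι K) :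
    (aeval p F).eval η = eval (fun i ↦ (p i).eval η) F := by
  simpa only [Polynomial.coe_aeval_eq_eval] using algHom_aeval_eq_eval (Polynomial.aeval η) p F

lemma aeval_pow_mul_monomial (w : ι → ℕ) (t : A) (p : ι → A) (e : ι →₀ ℕ) (a : K) :
    aeval (fun i ↦ t ^ w i * p i) (monomial e a) =
      t ^ Finsupp.weight w e * aeval p (monomial e a) := by
  rw [aeval_monomial, aeval_monomial, Finsupp.weight_apply]
  simp only [Finsupp.prod, Finsupp.sum, mul_pow, Finset.prod_mul_distrib, ← pow_mul,
    Finset.prod_pow_eq_pow_sum, smul_eq_mul, mul_comm (w _)]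
  ring

lemma coeff_aeval_C_pow_mul_X (w : ι → ℕ) (t : K) (e : ι →₀ ℕ) (F : MvPolynomial ι K) :
    coeff e (aeval (fun i ↦ (C t ^ w i * X i : MvPolynomial ι K)) F) =
      t ^ Finsupp.weight w e * coeff e F := by
  classical
  induction F using MvPolynomial.induction_on' with
  | monomial e' a =>
    rw [aeval_pow_mul_monomial, aeval_X_left_apply, ← map_pow, coeff_C_mul, coeff_monomial]
    split_ifs with h <;> simp [h]
  | add F G hF hG => rw [map_add, coeff_add, hF, hG, coeff_add, mul_add]

lemma exists_aeval_X_pow_mul_eq {w : ι → ℕ} {k : ℕ} {F : MvPolynomial ι K}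
    (hk : ∀ e ∈ F.support, k ≤ Finsupp.weight w e) (p : ι → K[X]) :
    ∃ q : K[X], aeval (fun i ↦ Polynomial.X ^ w i * p i) F = Polynomial.X ^ k * q ∧
      q.eval 0 = eval (fun i ↦ (p i).eval 0) (weightedHomogeneousComponent w k F) := by
  refine ⟨∑ e ∈ F.support,
    Polynomial.X ^ (Finsupp.weight w e - k) * aeval p (monomial e (coeff e F)), ?_, ?_⟩
  · conv_lhs => rw [F.as_sum]
    rw [map_sum, Finset.mul_sum]
    refine Finset.sum_congr rfl fun e he ↦ ?_
    rw [aeval_pow_mul_monomial, ← mul_assoc, ← pow_add, Nat.add_sub_cancel' (hk e he)]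
  · rw [Polynomial.eval_finsetSum, weightedHomogeneousComponent_apply, map_sum, Finset.sum_filter]
    refine Finset.sum_congr rfl fun e he ↦ ?_
    rw [Polynomial.eval_mul, polynomial_eval_aeval, Polynomial.eval_pow, Polynomial.eval_X]
    split_ifs with h
    · rw [h, Nat.sub_self, pow_zero, one_mul]
    · rw [zero_pow (by have := hk e he; omega), zero_mul]

variable [IsDomain K] [Infinite K]

lemma eq_of_forall_ne_zero_pow_eq {a b : ℕ} (h : ∀ t : K, t ≠ 0 → t ^ a = t ^ b) : a = b := by
  have hpoly : (Polynomial.X ^ (a + 1) : K[X]) = Polynomial.X ^ (b + 1) := by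
    refine Polynomial.funext fun t ↦ ?_
    obtain rfl | ht := eq_or_ne t 0
    · simp
    · simp [pow_succ, h t ht]
  simpa using congrArg Polynomial.natDegree hpoly

lemma weight_eq_add_weight_of_eval_eq {F : MvPolynomial ι K} {w w' : ι → ℕ} {d : ℕ}
    (h : ∀ t : K, t ≠ 0 → ∀ v : ι → K, eval (fun i ↦ t ^ w i * v i) F =
      t ^ d * eval (fun i ↦ t ^ w' i * v i) F)
    {e : ι →₀ ℕ} (he : e ∈ F.support) :
    Finsupp.weight w e = d + Finsupp.weight w' e := by
  refine eq_of_forall_ne_zero_pow_eq (K := K) fun t ht ↦ ?_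
  have haeval : aeval (fun i ↦ (C t ^ w i * X i : MvPolynomial ι K)) F =
      C (t ^ d) * aeval (fun i ↦ (C t ^ w' i * X i : MvPolynomial ι K)) F := by
    refine MvPolynomial.funext fun v ↦ ?_
    simpa only [map_mul, eval_aeval, map_pow, eval_C, eval_X] using h t ht v
  have hcoeff := congrArg (coeff e) haeval
  rw [coeff_C_mul, coeff_aeval_C_pow_mul_X, coeff_aeval_C_pow_mul_X, ← mul_assoc, ← pow_add]
    at hcoeff
  exact mul_right_cancel₀ (mem_support_iff.1 he) hcoeff

/-- A one-parameter family of symmetries of `F` that degenerates as `η` tends to `0` induces a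
symmetry of the component of lowest weight. -/
lemma eval_weightedHomogeneousComponent_eq {w : ι → ℕ} {k : ℕ} {F : MvPolynomial ι K}
    (hk : ∀ e ∈ F.support, k ≤ Finsupp.weight w e) {v u u' : ι → K}
    (h : ∀ η : K, eval (fun i ↦ η ^ w i * v i) F =
      eval (fun i ↦ η ^ w i * (u i + η * u' i)) F) :
    eval v (weightedHomogeneousComponent w k F) =
      eval u (weightedHomogeneousComponent w k F) := by
  obtain ⟨q, hq, hq0⟩ := exists_aeval_X_pow_mul_eq hk fun i ↦ Polynomial.C (v i)
  obtain ⟨q', hq', hq0'⟩ := exists_aeval_X_pow_mul_eq hk fun i ↦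
    Polynomial.C (u i) + Polynomial.X * Polynomial.C (u' i)
  have hqq' : q = q' := by
    refine mul_left_cancel₀ (pow_ne_zero k Polynomial.X_ne_zero) ?_
    rw [← hq, ← hq']
    refine Polynomial.funext fun η ↦ ?_
    simpa only [polynomial_eval_aeval, Polynomial.eval_mul, Polynomial.eval_pow,
      Polynomial.eval_X, Polynomial.eval_C, Polynomial.eval_add] using h η
  simpa [hqq', hq0'] using hq0.symm

end Weights

namespace ShearInvariance

variable {K ι : Type*} [CommRing K] {q : ℕ}

lemma eval_shear (a b : Fin q → ι) (t : K) (v : ι → K) (G : MvPolynomial ι K) :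
    eval v (shear a b t G) = eval (fun x ↦ v x + t * Function.extend b (v ∘ a) 0 x) G := by
  rw [shear, eval_aeval]
  congr 2 with x
  rw [map_add, map_mul, eval_X, eval_C, Function.apply_extend (eval v)]
  congr 3
  ext i
  simp

end ShearInvariance

/-- The function `F` of `r`-tuples `X` of `n × n` matrices is a semi-invariant of weight `d` under
simultaneous left and right multiplication: `F (Aᵀ X B) = (det A * det B) ^ d * F X`. -/
def IsSemiInvariant {K : Type} [Field K] {r n : ℕ} (d : ℕ)
    (F : MvPolynomial (Fin r × Fin n × Fin n) K) : Prop :=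
  ∀ A B : Matrix (Fin n) (Fin n) K, A.det ≠ 0 → B.det ≠ 0 →
    ∀ X : Fin r → Matrix (Fin n) (Fin n) K,
      eval (matCoords fun i ↦ Aᵀ * X i * B) F = (A.det * B.det) ^ d * eval (matCoords X) F

section Splitting

/-- The coordinates of a pair `P` of `(r * n) × n` matrices, whose rows are viewed as `r`
consecutive blocks of `n` rows. -/
abbrev SplitVar (r n : ℕ) := Bool × Fin (r * n) × Fin n

variable {K : Type} [Field K] {r n d : ℕ}

/-- The values of the coordinates at the pair `P`. -/
def splitCoords (P : Bool → Matrix (Fin (r * n)) (Fin n) K) : SplitVar r n → K :=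
  fun x ↦ P x.1 x.2.1 x.2.2

/-- The projection onto the rows of the block `i`. -/
def blockProj (K : Type) [Field K] {r : ℕ} (n : ℕ) (i : Fin r) :
    Matrix (Fin (r * n)) (Fin (r * n)) K :=
  diagonal fun s ↦ if s.divNat = i then 1 else 0

/-- The tuple of the products of the transposed blocks of `P false` with the blocks of `P true`. -/
def splitTuple (P : Bool → Matrix (Fin (r * n)) (Fin n) K) (i : Fin r) :
    Matrix (Fin n) (Fin n) K :=
  (P false)ᵀ * blockProj K n i * P true

/-- The substitution of a generic `splitTuple` into a polynomial function of `r`-tuples. -/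
noncomputable def splitSubst (K : Type) [Field K] (r n : ℕ) :
    MvPolynomial (Fin r × Fin n × Fin n) K →ₐ[K] MvPolynomial (SplitVar r n) K :=
  aeval fun p ↦ ∑ s : Fin (r * n),
    if s.divNat = p.1 then X (false, s, p.2.1) * X (true, s, p.2.2) else 0

lemma splitTuple_apply (P : Bool → Matrix (Fin (r * n)) (Fin n) K) (i : Fin r) (c c' : Fin n) :
    splitTuple P i c c' =
      ∑ s : Fin (r * n), if s.divNat = i then P false s c * P true s c' else 0 := by
  rw [splitTuple, blockProj, Matrix.mul_apply]
  refine Finset.sum_congr rfl fun s _ ↦ ?_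
  rw [mul_diagonal, transpose_apply]
  split_ifs <;> simp

lemma eval_splitSubst (P : Bool → Matrix (Fin (r * n)) (Fin n) K)
    (F : MvPolynomial (Fin r × Fin n × Fin n) K) :
    eval (splitCoords P) (splitSubst K r n F) = eval (matCoords (splitTuple P)) F := by
  rw [splitSubst, eval_aeval]
  congr 2 with p
  rw [matCoords, splitTuple_apply, map_sum]
  refine Finset.sum_congr rfl fun s _ ↦ ?_
  split_ifs <;> simp [splitCoords]

lemma splitCoords_surjective {K : Type} :
    Function.Surjective (splitCoords (K := K) (r := r) (n := n)) :=
  fun v ↦ ⟨fun b ↦ of fun s c ↦ v (b, s, c), rfl⟩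

lemma splitTuple_surjective : Function.Surjective (splitTuple (K := K) (r := r) (n := n)) := by
  refine fun X ↦ ⟨fun b ↦ of fun s c ↦
    bif b then X s.divNat s.modNat c else if s.modNat = c then 1 else 0, ?_⟩
  ext i c c'
  rw [splitTuple_apply, ← finProdFinEquiv.sum_comp, Fintype.sum_prod_type]
  have hdiv (i : Fin r) (c : Fin n) : (finProdFinEquiv (i, c)).divNat = i :=
    congrArg Prod.fst (finProdFinEquiv.symm_apply_apply (i, c))
  have hmod (i : Fin r) (c : Fin n) : (finProdFinEquiv (i, c)).modNat = c :=
    congrArg Prod.snd (finProdFinEquiv.symm_apply_apply (i, c))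
  simp [hdiv, hmod]

lemma splitSubst_injective [Infinite K] : Function.Injective (splitSubst K r n) := by
  refine (injective_iff_map_eq_zero _).2 fun F hF ↦ MvPolynomial.funext fun x ↦ ?_
  obtain ⟨P, hP⟩ := splitTuple_surjective fun i ↦ of fun c c' ↦ x (i, c, c')
  have heval := eval_splitSubst P F
  rw [hF, map_zero, hP] at heval
  rw [map_zero]
  exact heval.symm

/-- The weight of a row, which separates the two sides and the rows of a block. -/
def rowWeight (b : Bool) (s : Fin (r * n)) : ℕ := bif b then 0 else s.modNat.val

/-- The weight of the row of a coordinate. -/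
def splitWeight (x : SplitVar r n) : ℕ := rowWeight x.1 x.2.1

/-- The diagonal matrices that multiply each row by `η` to the power of its weight. -/
def rowScaling (r n : ℕ) (η : K) (b : Bool) : Matrix (Fin (r * n)) (Fin (r * n)) K :=
  diagonal fun s ↦ η ^ rowWeight b s

lemma pow_splitWeight_mul (η : K) (P : Bool → Matrix (Fin (r * n)) (Fin n) K) :
    (fun x ↦ η ^ splitWeight x * splitCoords P x) =
      splitCoords fun b ↦ rowScaling r n η b * P b := by
  ext ⟨b, s, c⟩
  exact (diagonal_mul (fun s ↦ η ^ rowWeight b s) (P b) s c).symm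

lemma eval_splitSubst_update_mul {F : MvPolynomial (Fin r × Fin n × Fin n) K}
    (hF : IsSemiInvariant d F) (b : Bool) {E : Matrix (Fin n) (Fin n) K} (hE : E.det ≠ 0)
    (P : Bool → Matrix (Fin (r * n)) (Fin n) K) :
    eval (splitCoords (Function.update P b (P b * E))) (splitSubst K r n F) =
      E.det ^ d * eval (splitCoords P) (splitSubst K r n F) := by
  rw [eval_splitSubst, eval_splitSubst]
  cases b
  · have h := hF E 1 hE (by simp) (splitTuple P)
    rw [det_one, mul_one] at h
    rw [← h]
    congr 3 with i
    simp [splitTuple, transpose_mul, Matrix.mul_assoc]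
  · have h := hF 1 E (by simp) hE (splitTuple P)
    rw [det_one, one_mul] at h
    rw [← h]
    congr 3 with i
    simp [splitTuple, Matrix.mul_assoc]

lemma transvection_mul_diagonal {ι R : Type*} [Fintype ι] [DecidableEq ι] [CommRing R] {i j : ι}
    {c c' : R} {w : ι → R} (h : c * w j = w i * c') :
    transvection i j c * diagonal w = diagonal w * transvection i j c' := by
  rw [transvection, transvection, add_mul, mul_add, one_mul, mul_one]
  congr 1
  ext k l
  rw [mul_diagonal, diagonal_mul, single_apply, single_apply]
  split_ifs with hkl
  · rw [← hkl.1, ← hkl.2, h]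
  · simp

lemma rowScaling_mul_blockProj (η : K) (i : Fin r) :
    rowScaling r n η false * blockProj K n i =
      diagonal fun s ↦ η ^ s.modNat.val * if s.divNat = i then 1 else 0 :=
  diagonal_mul_diagonal _ _

lemma splitTuple_rowScaling_mul (η : K) (P : Bool → Matrix (Fin (r * n)) (Fin n) K) (i : Fin r) :
    splitTuple (fun b ↦ rowScaling r n η b * P b) i =
      (P false)ᵀ * (rowScaling r n η false * blockProj K n i) * P true := by
  simp [splitTuple, rowScaling, rowWeight, transpose_mul, Matrix.mul_assoc]

lemma splitTuple_rowScaling_mul_update_transvection (η t : K) (b : Bool) {s₀ s₁ : Fin (r * n)}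
    (hdiv : s₀.divNat = s₁.divNat) (hmod : s₁.modNat.val = s₀.modNat.val + 1)
    (P : Bool → Matrix (Fin (r * n)) (Fin n) K) :
    splitTuple (fun b' ↦ rowScaling r n η b' *
        Function.update P b (transvection s₁ s₀ t * P b) b') =
      splitTuple fun b' ↦ rowScaling r n η b' *
        Function.update P (!b) (transvection s₀ s₁ (η * t) * P (!b)) b' := by
  ext1 i
  set w : Fin (r * n) → K := fun s ↦ η ^ s.modNat.val * if s.divNat = i then 1 else 0 with hw
  have hw₁ : w s₁ = η * w s₀ := by simp only [hw, hdiv, hmod, pow_succ']; ring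
  rw [splitTuple_rowScaling_mul, splitTuple_rowScaling_mul, rowScaling_mul_blockProj]
  cases b
  · have hcomm : transvection s₀ s₁ t * diagonal w = diagonal w * transvection s₀ s₁ (η * t) :=
      transvection_mul_diagonal (by rw [hw₁]; ring)
    simpa [transvection, transpose_mul, Matrix.mul_assoc, hw] using
      congrArg (fun W ↦ (P false)ᵀ * W * P true) hcomm
  · have hcomm : transvection s₁ s₀ (η * t) * diagonal w = diagonal w * transvection s₁ s₀ t :=
      transvection_mul_diagonal (by rw [hw₁]; ring)
    simpa [transvection, transpose_mul, Matrix.mul_assoc, hw] using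
      congrArg (fun W ↦ (P false)ᵀ * W * P true) hcomm.symm

end Splitting

section LowestComponent

variable {K : Type} [Field K] [Infinite K] {r n d k : ℕ} {e : SplitVar r n →₀ ℕ}
  {F : MvPolynomial (Fin r × Fin n × Fin n) K}

lemma sum_column_eq (hF : IsSemiInvariant d F) (he : e ∈ (splitSubst K r n F).support) (b : Bool)
    (c : Fin n) : ∑ s, e (b, s, c) = d := by
  have hweight := weight_eq_add_weight_of_eval_eq (d := d) (w' := 0)
    (w := fun x : SplitVar r n ↦ if x.1 = b ∧ x.2.2 = c then 1 else 0)
    (fun t ht v ↦ ?_) he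
  · simpa [Finsupp.weight_apply, Finsupp.sum_fintype, Fintype.sum_prod_type, ite_and] using hweight
  obtain ⟨P, rfl⟩ := splitCoords_surjective v
  have hdet : (diagonal (Function.update (1 : Fin n → K) c t)).det = t := by
    rw [det_diagonal, Finset.prod_update_of_mem (Finset.mem_univ c)]
    simp
  have heval := eval_splitSubst_update_mul hF b (by rwa [hdet]) P
  rw [hdet] at heval
  simp only [Pi.zero_apply, pow_zero, one_mul]
  rw [← heval]
  congr 2 with ⟨b', s, c'⟩
  by_cases hb : b' = b
  · subst hb
    by_cases hc : c' = c <;> simp [splitCoords, mul_diagonal, hc, mul_comm]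
  · simp [splitCoords, hb]

lemma sum_row_eq (he : e ∈ (splitSubst K r n F).support) (s : Fin (r * n)) :
    ∑ c, e (false, s, c) = ∑ c, e (true, s, c) := by
  have hweight := weight_eq_add_weight_of_eval_eq (d := 0)
    (w := fun x : SplitVar r n ↦ if x.1 = false ∧ x.2.1 = s then 1 else 0)
    (w' := fun x : SplitVar r n ↦ if x.1 = true ∧ x.2.1 = s then 1 else 0)
    (fun t _ v ↦ ?_) he
  · simpa [Finsupp.weight_apply, Finsupp.sum_fintype, Fintype.sum_prod_type_right, ite_and]
      using hweight
  obtain ⟨P, rfl⟩ := splitCoords_surjective v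
  have hscale (b : Bool) : (fun x : SplitVar r n ↦
      t ^ (if x.1 = b ∧ x.2.1 = s then 1 else 0) * splitCoords P x) =
      splitCoords (Function.update P b (diagonal (Function.update 1 s t) * P b)) := by
    ext ⟨b', s', c⟩
    by_cases hb : b' = b
    · subst hb
      by_cases hs : s' = s <;> simp [splitCoords, diagonal_mul, hs]
    · simp [splitCoords, hb]
  rw [pow_zero, one_mul, hscale, hscale, eval_splitSubst, eval_splitSubst]
  congr 3 with i : 1
  simp [splitTuple, transpose_mul, Matrix.mul_assoc, blockProj, mul_comm,
    ← Matrix.mul_assoc (diagonal _) (diagonal _)]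

lemma eval_lowestComponent_update_mul (hF : IsSemiInvariant d F)
    (hk : ∀ e ∈ (splitSubst K r n F).support, k ≤ Finsupp.weight splitWeight e) (b : Bool)
    {E : Matrix (Fin n) (Fin n) K} (hE : E.det = 1)
    (P : Bool → Matrix (Fin (r * n)) (Fin n) K) :
    eval (splitCoords (Function.update P b (P b * E)))
        (weightedHomogeneousComponent splitWeight k (splitSubst K r n F)) =
      eval (splitCoords P) (weightedHomogeneousComponent splitWeight k (splitSubst K r n F)) := by
  refine eval_weightedHomogeneousComponent_eq hk (u' := 0) fun η ↦ ?_
  simp only [Pi.zero_apply, mul_zero, add_zero]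
  rw [pow_splitWeight_mul, pow_splitWeight_mul]
  convert eval_splitSubst_update_mul hF b (hE ▸ one_ne_zero) fun b ↦ rowScaling r n η b * P b
    using 2
  · congr 2 with b' : 1
    by_cases hb : b' = b
    · subst hb; simp [Matrix.mul_assoc]
    · simp [hb]
  · simp [hE]

lemma eval_lowestComponent_update_transvection_mul
    (hk : ∀ e ∈ (splitSubst K r n F).support, k ≤ Finsupp.weight splitWeight e) (b : Bool)
    {s₀ s₁ : Fin (r * n)} (hdiv : s₀.divNat = s₁.divNat)
    (hmod : s₁.modNat.val = s₀.modNat.val + 1) (t : K)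
    (P : Bool → Matrix (Fin (r * n)) (Fin n) K) :
    eval (splitCoords (Function.update P b (transvection s₁ s₀ t * P b)))
        (weightedHomogeneousComponent splitWeight k (splitSubst K r n F)) =
      eval (splitCoords P) (weightedHomogeneousComponent splitWeight k (splitSubst K r n F)) := by
  refine eval_weightedHomogeneousComponent_eq hk
    (u' := splitCoords (Function.update 0 (!b) (single s₀ s₁ t * P (!b)))) fun η ↦ ?_
  have hadd : (fun x ↦ splitCoords P x +
      η * splitCoords (Function.update 0 (!b) (single s₀ s₁ t * P (!b))) x) =
      splitCoords (Function.update P (!b) (transvection s₀ s₁ (η * t) * P (!b))) := by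
    ext ⟨b', s, c⟩
    by_cases hb : b' = !b
    · subst hb
      simp only [splitCoords, Function.update_self, transvection, Matrix.add_mul, Matrix.one_mul]
      rw [← smul_eq_mul η t, ← Matrix.smul_single, Matrix.smul_mul]
      rfl
    · simp [splitCoords, hb]
  rw [funext fun x ↦ congrArg (η ^ splitWeight x * ·) (congrFun hadd x), pow_splitWeight_mul,
    pow_splitWeight_mul, eval_splitSubst, eval_splitSubst,
    splitTuple_rowScaling_mul_update_transvection η t b hdiv hmod]

end LowestComponent

section LeadingExponent

variable {r n d : ℕ} {e e' : SplitVar r n →₀ ℕ}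

/-- The lexicographic order of the coordinates. -/
def varOrder : SplitVar r n ≃ Bool ×ₗ (Fin (r * n) ×ₗ Fin n) :=
  ((Equiv.refl Bool).prodCongr toLex).trans toLex

/-- The key of an exponent in the monomial order: a smaller weight wins, then the lexicographic
order. -/
noncomputable def monomialKey (e : SplitVar r n →₀ ℕ) :
    ℕᵒᵈ ×ₗ Lex (Bool ×ₗ (Fin (r * n) ×ₗ Fin n) → ℕ) :=
  toLex (OrderDual.toDual (Finsupp.weight splitWeight e), toLex (e ∘ varOrder.symm))

/-- The exponent `e` is the greatest one in the support of `G` for the monomial order. -/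
def IsLeadingExponent {K : Type} [Field K] (G : MvPolynomial (SplitVar r n) K)
    (e : SplitVar r n →₀ ℕ) : Prop :=
  e ∈ G.support ∧ ∀ e' ∈ G.support, monomialKey e' ≤ monomialKey e

lemma varOrder_lt_iff {x y : SplitVar r n} : varOrder x < varOrder y ↔
    x.1 < y.1 ∨ x.1 = y.1 ∧ (x.2.1 < y.2.1 ∨ x.2.1 = y.2.1 ∧ x.2.2 < y.2.2) := by
  change toLex (x.1, toLex x.2) < toLex (y.1, toLex y.2) ↔ _
  rw [Prod.Lex.toLex_lt_toLex, Prod.Lex.toLex_lt_toLex]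

lemma monomialKey_injective : Function.Injective (monomialKey (r := r) (n := n)) := by
  intro e e' h
  have hcomp : e ∘ varOrder.symm = e' ∘ varOrder.symm := congrArg (fun z ↦ (ofLex z).2) h
  exact DFunLike.coe_injective (varOrder.symm.surjective.injective_comp_right hcomp)

lemma weight_le_of_monomialKey_le (h : monomialKey e' ≤ monomialKey e) :
    Finsupp.weight splitWeight e ≤ Finsupp.weight splitWeight e' :=
  OrderDual.toDual_le_toDual.1 (Prod.Lex.monotone_fst _ _ h)

lemma apply_le_of_monomialKey_le (h : monomialKey e' ≤ monomialKey e)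
    (hweight : Finsupp.weight splitWeight e' = Finsupp.weight splitWeight e) {x : SplitVar r n}
    (hx : ∀ y, varOrder y < varOrder x → e' y = e y) : e' x ≤ e x := by
  by_contra! hlt
  rcases (Prod.Lex.toLex_le_toLex ..).1 h with h | h
  · exact absurd (OrderDual.toDual_lt_toDual.1 h) (by rw [hweight]; exact lt_irrefl _)
  · refine absurd h.2 (not_le_of_gt ⟨varOrder x, fun y hy ↦ ?_, ?_⟩)
    · exact (hx (varOrder.symm y) (by rwa [Equiv.apply_symm_apply])).symm
    · simpa using hlt

variable {K : Type} [Field K]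

lemma exists_isLeadingExponent {G : MvPolynomial (SplitVar r n) K} (hG : G ≠ 0) :
    ∃ e, IsLeadingExponent G e :=
  G.support.exists_max_image monomialKey (support_nonempty.2 hG)

lemma add_mul_extend_column (P : Bool → Matrix (Fin (r * n)) (Fin n) K) (b : Bool) {c c₁ : Fin n}
    (t : K) :
    (fun x ↦ splitCoords P x + t * Function.extend (fun s ↦ (b, s, c₁))
      (splitCoords P ∘ fun s ↦ (b, s, c)) 0 x) =
      splitCoords (Function.update P b (P b * transvection c c₁ t)) := by
  ext ⟨b', s, c'⟩
  by_cases hx : b' = b ∧ c' = c₁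
  · obtain ⟨rfl, rfl⟩ := hx
    have hinj : Function.Injective fun s : Fin (r * n) ↦ (b', s, c') := fun _ _ h ↦ by simpa using h
    have hext : Function.extend (fun s ↦ (b', s, c')) (splitCoords P ∘ fun s ↦ (b', s, c)) 0
      (b', s, c') = P b' s c := hinj.extend_apply _ _ s
    simp [splitCoords, hext]
  · rw [Function.extend_apply' _ _ _ (by rintro ⟨s', hs'⟩; simp_all)]
    by_cases hb : b' = b
    · subst hb
      simp_all [splitCoords]
    · simp [splitCoords, hb]

lemma add_mul_extend_row (P : Bool → Matrix (Fin (r * n)) (Fin n) K) (b : Bool)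
    {s₀ s₁ : Fin (r * n)} (t : K) :
    (fun x ↦ splitCoords P x + t * Function.extend (fun c ↦ (b, s₁, c))
      (splitCoords P ∘ fun c ↦ (b, s₀, c)) 0 x) =
      splitCoords (Function.update P b (transvection s₁ s₀ t * P b)) := by
  ext ⟨b', s, c⟩
  by_cases hx : b' = b ∧ s = s₁
  · obtain ⟨rfl, rfl⟩ := hx
    have hinj : Function.Injective fun c : Fin n ↦ (b', s, c) := fun _ _ h ↦ by simpa using h
    have hext : Function.extend (fun c ↦ (b', s, c)) (splitCoords P ∘ fun c ↦ (b', s₀, c)) 0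
      (b', s, c) = P b' s₀ c := hinj.extend_apply _ _ c
    simp [splitCoords, hext]
  · rw [Function.extend_apply' _ _ _ (by rintro ⟨c', hc'⟩; simp_all)]
    by_cases hb : b' = b
    · subst hb
      simp_all [splitCoords]
    · simp [splitCoords, hb]

variable [Infinite K]

lemma IsLeadingExponent.sum_Iic_le_sum_Iio {G : MvPolynomial (SplitVar r n) K}
    (he : IsLeadingExponent G e) {q : ℕ} {a b : Fin q → SplitVar r n} (ha : a.Injective)
    (hb : b.Injective) (hab : ∀ i j, a i ≠ b j)
    (hG : ∀ t, ShearInvariance.shear a b t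
      (weightedHomogeneousComponent splitWeight (Finsupp.weight splitWeight e) G) =
        weightedHomogeneousComponent splitWeight (Finsupp.weight splitWeight e) G)
    (haa : ∀ i j, varOrder (a i) < varOrder (a j) → i < j)
    (hba : ∀ i j, varOrder (b i) < varOrder (a j) → i < j) (j : Fin q) :
    ∑ i ∈ Finset.Iic j, e (b i) ≤ ∑ i ∈ Finset.Iio j, e (a i) := by
  have hsupport {e'} : e' ∈ (weightedHomogeneousComponent splitWeight
      (Finsupp.weight splitWeight e) G).support ↔
      Finsupp.weight splitWeight e' = Finsupp.weight splitWeight e ∧ e' ∈ G.support := by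
    rw [mem_support_iff, coeff_weightedHomogeneousComponent, ite_ne_right_iff, mem_support_iff]
  refine ShearInvariance.sum_Iic_le_sum_Iio_of_shear_invariant ha hb hab hG (hsupport.2 ⟨rfl, he.1⟩)
    (fun e' he' hoff hsum j hj ↦ ?_) j
  obtain ⟨hweight, he'⟩ := hsupport.1 he'
  have hle : e' (a j) ≤ e (a j) := by
    refine apply_le_of_monomialKey_le (he.2 e' he') hweight fun y hy ↦ ?_
    by_cases hya : y ∈ Set.range a
    · obtain ⟨i, rfl⟩ := hya
      have := hsum i
      have := hj i (haa i j hy)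
      omega
    by_cases hyb : y ∈ Set.range b
    · obtain ⟨i, rfl⟩ := hyb
      exact hj i (hba i j hy)
    · exact hoff y hya hyb
  have := hsum j
  omega

variable {F : MvPolynomial (Fin r × Fin n × Fin n) K}

lemma IsLeadingExponent.sum_column_le (hF : IsSemiInvariant d F)
    (he : IsLeadingExponent (splitSubst K r n F) e) (b : Bool) {c c₁ : Fin n}
    (hc : c < c₁) (j : Fin (r * n)) :
    ∑ s ∈ Finset.Iic j, e (b, s, c₁) ≤ ∑ s ∈ Finset.Iio j, e (b, s, c) := by
  refine he.sum_Iic_le_sum_Iio (a := fun s ↦ (b, s, c)) (b := fun s ↦ (b, s, c₁))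
    (fun s s' h ↦ by simpa using h) (fun s s' h ↦ by simpa using h) (by simp [hc.ne])
    (fun t ↦ MvPolynomial.funext fun v ↦ ?_) (by simp [varOrder_lt_iff])
    (by simp [varOrder_lt_iff, hc.not_gt]) j
  obtain ⟨P, rfl⟩ := splitCoords_surjective v
  rw [ShearInvariance.eval_shear, add_mul_extend_column]
  exact eval_lowestComponent_update_mul hF
    (fun e' he' ↦ weight_le_of_monomialKey_le (he.2 e' he')) b
    (det_transvection_of_ne c c₁ hc.ne t) P

lemma IsLeadingExponent.sum_row_le (he : IsLeadingExponent (splitSubst K r n F) e) (b : Bool)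
    {s₀ s₁ : Fin (r * n)} (hs : s₀ < s₁) (hdiv : s₀.divNat = s₁.divNat)
    (hmod : s₁.modNat.val = s₀.modNat.val + 1) (j : Fin n) :
    ∑ c ∈ Finset.Iic j, e (b, s₁, c) ≤ ∑ c ∈ Finset.Iio j, e (b, s₀, c) := by
  refine he.sum_Iic_le_sum_Iio (a := fun c ↦ (b, s₀, c)) (b := fun c ↦ (b, s₁, c))
    (fun c c' h ↦ by simpa using h) (fun c c' h ↦ by simpa using h) (by simp [hs.ne])
    (fun t ↦ MvPolynomial.funext fun v ↦ ?_) (by simp [varOrder_lt_iff])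
    (by simp [varOrder_lt_iff, hs.not_gt, hs.ne']) j
  obtain ⟨P, rfl⟩ := splitCoords_surjective v
  rw [ShearInvariance.eval_shear, add_mul_extend_row]
  exact eval_lowestComponent_update_transvection_mul
    (fun e' he' ↦ weight_le_of_monomialKey_le (he.2 e' he')) b hdiv hmod t P

end LeadingExponent

section ExponentTable

variable {r n d : ℕ}

/-- The exponents on the side `b` as a table of natural numbers, zero outside `(r * n) × n`. -/
def exponentTable (e : SplitVar r n →₀ ℕ) (b : Bool) (s c : ℕ) : ℕ :=
  if h : s < r * n ∧ c < n then e (b, ⟨s, h.1⟩, ⟨c, h.2⟩) else 0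

variable (e : SplitVar r n →₀ ℕ) (b : Bool)

lemma exponentTable_val (s : Fin (r * n)) (c : Fin n) : exponentTable e b s c = e (b, s, c) := by
  simp [exponentTable]

lemma colPrefix_exponentTable (c : Fin n) :
    colPrefix (exponentTable e b) (r * n) c = ∑ s, e (b, s, c) := by
  simp only [colPrefix, ← exponentTable_val, Fin.sum_univ_eq_sum_range (exponentTable e b · c)]

lemma rowPrefix_exponentTable (s : Fin (r * n)) :
    rowPrefix (exponentTable e b) s n = ∑ c, e (b, s, c) := by
  simp only [rowPrefix, ← exponentTable_val, Fin.sum_univ_eq_sum_range (exponentTable e b s)]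

lemma sum_Iio_val (f : ℕ → ℕ) {q : ℕ} (j : Fin q) :
    ∑ i ∈ Finset.Iio j, f i = ∑ i ∈ Finset.range j, f i := by
  rw [← Nat.Iio_eq_range, ← Fin.map_valEmbedding_Iio, Finset.sum_map]
  rfl

lemma sum_Iic_val (f : ℕ → ℕ) {q : ℕ} (j : Fin q) :
    ∑ i ∈ Finset.Iic j, f i = ∑ i ∈ Finset.range (j + 1), f i := by
  rw [Nat.range_succ_eq_Iic, ← Fin.map_valEmbedding_Iic, Finset.sum_map]
  rfl

variable {e} {K : Type} [Field K] [Infinite K] {F : MvPolynomial (Fin r × Fin n × Fin n) K}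

lemma IsLeadingExponent.pictureTable (hF : IsSemiInvariant d F)
    (he : IsLeadingExponent (splitSubst K r n F) e) :
    PictureTable (exponentTable e b) n (r * n) d (· / n) where
  eq_zero s hs c := dif_neg (by omega)
  colPrefix_succ_le s hs c hc := by
    have h := he.sum_column_le hF b (c := ⟨c, by omega⟩) (c₁ := ⟨c + 1, hc⟩) (Nat.lt_succ_self c)
      ⟨s, hs⟩
    simp only [← exponentTable_val] at h
    rwa [sum_Iio_val (exponentTable e b · c), sum_Iic_val (exponentTable e b · (c + 1))] at h
  rowPrefix_succ_le s hs hblock c hc := by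
    have hmod : (s + 1) % n = s % n + 1 := by
      have h₀ := Nat.div_add_mod s n
      have h₁ := Nat.div_add_mod (s + 1) n
      rw [← show s / n = (s + 1) / n from hblock] at h₁
      omega
    have h := he.sum_row_le b (s₀ := ⟨s, by omega⟩) (s₁ := ⟨s + 1, hs⟩) (Nat.lt_succ_self s)
      (Fin.ext hblock) hmod ⟨c, hc⟩
    simp only [← exponentTable_val] at h
    rwa [sum_Iio_val (exponentTable e b s), sum_Iic_val (exponentTable e b (s + 1))] at h
  colPrefix_eq c hc := by
    rw [← sum_column_eq hF he.1 b ⟨c, hc⟩, ← colPrefix_exponentTable]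
  monotone_block _ _ h := Nat.div_le_div_right h

lemma rowPrefix_exponentTable_true (he : e ∈ (splitSubst K r n F).support) (s : ℕ) :
    rowPrefix (exponentTable e true) s n = rowPrefix (exponentTable e false) s n := by
  by_cases hs : s < r * n
  · have htrue := rowPrefix_exponentTable e true ⟨s, hs⟩
    have hfalse := rowPrefix_exponentTable e false ⟨s, hs⟩
    rw [← sum_row_eq he] at htrue
    exact htrue.trans hfalse.symm
  · simp [rowPrefix, exponentTable, hs]

end ExponentTable

section DiagramEnumerations

variable {d n D M : ℕ} {A A' : ℕ → ℕ → ℕ} {g h : Fin d × Fin n → Fin D × Fin M}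

lemma IsDiagramEnumeration.congr (hh : IsDiagramEnumeration A h)
    (hA : ∀ s, rowPrefix A s n = rowPrefix A' s n) : IsDiagramEnumeration A' h where
  injective := hh.injective
  mem x := hA _ ▸ hh.mem x
  surjective k s hk := hh.surjective k s (hA s ▸ hk)

lemma IsDiagramEnumeration.of_comp_perm {σ : Equiv.Perm (Fin d × Fin n)}
    (hh : IsDiagramEnumeration A (h ∘ σ)) : IsDiagramEnumeration A h where
  injective := (Function.Injective.of_comp_iff' h σ.bijective).1 hh.injective
  mem x := by simpa using hh.mem (σ.symm x)
  surjective k s hk := (hh.surjective k s hk).imp' σ fun _ ↦ id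

lemma IsDiagramEnumeration.exists_perm (hg : IsDiagramEnumeration A g)
    (hh : IsDiagramEnumeration A h) : ∃ σ : Equiv.Perm (Fin d × Fin n), g = h ∘ σ := by
  have hpreimage (x) : ∃ y, g x = h y := by
    obtain ⟨y, hk, hs⟩ := hh.surjective _ _ (hg.mem x)
    exact ⟨y, Prod.ext (Fin.ext hk.symm) (Fin.ext hs.symm)⟩
  choose f hf using hpreimage
  have hinj : f.Injective := fun x y hxy ↦ hg.injective (by rw [hf, hf, hxy])
  exact ⟨Equiv.ofBijective f (Finite.injective_iff_bijective.1 hinj), funext hf⟩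

end DiagramEnumerations

section EnumerationExponents

variable {r n d D : ℕ}

/-- The exponent of the pencil variables in the term of the determinant expansion given by the pair
`h` of maps from positions to cells. -/
noncomputable def pencilExponent (h : Bool → Fin d × Fin n → Fin D × Fin (r * n)) :
    PencilVar r D d →₀ ℕ :=
  ∑ b, ∑ x, Finsupp.single (b, ((h b x).2.divNat, (h b x).1), x.1) 1

/-- The exponent of the split variables in the term of the determinant expansion given by the pair
`h` of maps from positions to cells. -/
noncomputable def splitExponent (h : Bool → Fin d × Fin n → Fin D × Fin (r * n)) :
    SplitVar r n →₀ ℕ :=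
  ∑ b, ∑ x, Finsupp.single (b, (h b x).2, x.2) 1

lemma sum_sum_single_apply {J V : Type*} [Fintype J] [DecidableEq V] (f : Bool → J → V) (b : Bool)
    (v : V) : (∑ b', ∑ x, Finsupp.single (b', f b' x) 1 : Bool × V →₀ ℕ) (b, v) =
      Finset.card {x | f b x = v} := by
  rw [Finsupp.finsetSum_apply, Finset.sum_eq_single_of_mem b (Finset.mem_univ b) fun b' _ hb ↦ ?_,
    Finsupp.finsetSum_apply, Finset.card_filter]
  · simp [Finsupp.single_apply]
  · simp [Finsupp.finsetSum_apply, hb]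

variable (g h : Bool → Fin d × Fin n → Fin D × Fin (r * n)) (b : Bool)

lemma pencilExponent_apply (i : Fin r) (k : Fin D) (l : Fin d) :
    pencilExponent h (b, (i, k), l) = blockCount (h b) i k l := by
  rw [pencilExponent, sum_sum_single_apply (fun b x ↦ (((h b x).2.divNat, (h b x).1), x.1)),
    blockCount]
  simp only [Prod.mk.injEq, Fin.ext_iff, Fin.coe_divNat, and_assoc]

lemma splitExponent_apply (s : Fin (r * n)) (c : Fin n) :
    splitExponent h (b, s, c) = letterCount (h b) s c := by
  rw [splitExponent, sum_sum_single_apply (fun b x ↦ ((h b x).2, x.2)), letterCount]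
  simp only [Prod.mk.injEq, Fin.ext_iff]

lemma weight_splitExponent :
    Finsupp.weight splitWeight (splitExponent h) = ∑ x, (h false x).2.val % n := by
  simp [splitExponent, Finsupp.weight_single, splitWeight, rowWeight]

variable {g h} in
lemma blockCount_eq_of_pencilExponent_eq (hgh : pencilExponent g = pencilExponent h) (i k l : ℕ) :
    blockCount (g b) i k l = blockCount (h b) i k l := by
  by_cases hrange : i < r ∧ k < D ∧ l < d
  · obtain ⟨hi, hk, hl⟩ := hrange
    have happly := DFunLike.congr_fun hgh (b, (⟨i, hi⟩, ⟨k, hk⟩), ⟨l, hl⟩)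
    rwa [pencilExponent_apply, pencilExponent_apply] at happly
  · have hzero (f : Fin d × Fin n → Fin D × Fin (r * n)) : blockCount f i k l = 0 := by
      rw [blockCount, Finset.card_eq_zero, Finset.filter_eq_empty_iff]
      rintro x - ⟨rfl, rfl, rfl⟩
      exact hrange ⟨(f x).2.divNat.2, (f x).1.2, x.1.2⟩
    rw [hzero, hzero]

/-- The conditions satisfied by the leading exponent of a semi-invariant after splitting. -/
structure IsPictureExponent (d : ℕ) (e : SplitVar r n →₀ ℕ) : Prop where
  pictureTable : ∀ b, PictureTable (exponentTable e b) n (r * n) d (· / n)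
  rowPrefix_eq : ∀ s, rowPrefix (exponentTable e true) s n = rowPrefix (exponentTable e false) s n

lemma IsLeadingExponent.isPictureExponent {K : Type} [Field K] [Infinite K]
    {F : MvPolynomial (Fin r × Fin n × Fin n) K} {e : SplitVar r n →₀ ℕ} (hF : IsSemiInvariant d F)
    (he : IsLeadingExponent (splitSubst K r n F) e) : IsPictureExponent d e :=
  ⟨fun b ↦ he.pictureTable b hF, rowPrefix_exponentTable_true he.1⟩

variable {g h b} {e : SplitVar r n →₀ ℕ} {h₀ : Bool → Fin d × Fin n → Fin D × Fin (r * n)}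

lemma splitExponent_eq (hh₀ : ∀ b, IsStandardEnumeration (exponentTable e b) (h₀ b)) :
    splitExponent h₀ = e := by
  ext ⟨b, s, c⟩
  rw [splitExponent_apply, (hh₀ b).letterCount_eq s c.2, exponentTable_val]

namespace IsPictureExponent

lemma exists_isStandardEnumeration (he : IsPictureExponent d e) (b : Bool) :
    ∃ h : Fin d × Fin n → Fin (n * d) × Fin (r * n),
      IsStandardEnumeration (exponentTable e b) h :=
  (he.pictureTable b).exists_isStandardEnumeration (he.pictureTable b).rowPrefix_le_mul

/-- The weight only involves the side `false`, but the two sides enumerate the same cells. -/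
lemma isDiagramEnumeration (he : IsPictureExponent d e)
    (hh₀ : ∀ b, IsStandardEnumeration (exponentTable e b) (h₀ b)) (hinj : (h true).Injective)
    {σ : Equiv.Perm (Fin d × Fin n)} (hσ : h false = h true ∘ σ)
    (hpencil : pencilExponent h = pencilExponent h₀)
    (hkey : monomialKey e ≤ monomialKey (splitExponent h)) (b : Bool) :
    IsDiagramEnumeration (exponentTable e b) (h b) := by
  have hweight := weight_le_of_monomialKey_le hkey
  rw [← splitExponent_eq hh₀, weight_splitExponent, weight_splitExponent] at hweight
  have hfalse : IsDiagramEnumeration (exponentTable e false) (h false) :=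
    (hh₀ false).of_blockCount_eq (he.pictureTable false) (hσ ▸ hinj.comp σ.injective)
      (blockCount_eq_of_pencilExponent_eq false hpencil) hweight
  cases b
  · exact hfalse
  · exact (hσ ▸ hfalse).of_comp_perm.congr fun s ↦ (he.rowPrefix_eq s).symm

lemma eq_of_pencilExponent_eq_of_forall_lt (he : IsPictureExponent d e)
    (hh₀ : ∀ b, IsStandardEnumeration (exponentTable e b) (h₀ b))
    (hh : ∀ b, IsDiagramEnumeration (exponentTable e b) (h b))
    (hpencil : pencilExponent h = pencilExponent h₀)
    (hkey : monomialKey e ≤ monomialKey (splitExponent h)) (hlt : ∀ b' < b, h b' = h₀ b') :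
    h b = h₀ b := by
  have hweight : Finsupp.weight splitWeight e =
      Finsupp.weight splitWeight (splitExponent h) := by
    obtain ⟨ρ, hρ⟩ := (hh₀ false).exists_perm (hh false)
    rw [← splitExponent_eq hh₀, weight_splitExponent, weight_splitExponent, hρ]
    exact Equiv.sum_comp ρ fun x ↦ (h false x).2.val % n
  refine (hh b).eq_of_blockCount_eq (he.pictureTable b) (hh₀ b)
    (blockCount_eq_of_pencilExponent_eq b hpencil) fun s hs hrows c hc hcols ↦ ?_
  have hle : e (b, ⟨s, hs⟩, ⟨c, hc⟩) ≤ splitExponent h (b, ⟨s, hs⟩, ⟨c, hc⟩) := by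
    refine apply_le_of_monomialKey_le hkey hweight fun ⟨b', s', c'⟩ hlt' ↦ ?_
    rw [splitExponent_apply, ← exponentTable_val]
    rcases varOrder_lt_iff.1 hlt' with hb | ⟨hb, hs' | ⟨hs', hc'⟩⟩
    · rw [hlt b' hb, (hh₀ b').letterCount_eq s' c'.2]
    · obtain rfl : b' = b := hb
      exact (hrows s' hs' c' c'.2).symm
    · obtain rfl : b' = b := hb
      obtain rfl : s' = ⟨s, hs⟩ := hs'
      exact (hcols c' hc').symm
  rwa [splitExponent_apply, ← exponentTable_val] at hle

theorem eq_of_pencilExponent_eq (he : IsPictureExponent d e)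
    (hh₀ : ∀ b, IsStandardEnumeration (exponentTable e b) (h₀ b)) (hinj : (h true).Injective)
    {σ : Equiv.Perm (Fin d × Fin n)} (hσ : h false = h true ∘ σ)
    (hpencil : pencilExponent h = pencilExponent h₀)
    (hkey : monomialKey e ≤ monomialKey (splitExponent h)) : h = h₀ := by
  have hh := he.isDiagramEnumeration hh₀ hinj hσ hpencil hkey
  refine funext fun b ↦ ?_
  induction b using WellFoundedLT.induction with
  | _ b ih => exact he.eq_of_pencilExponent_eq_of_forall_lt hh₀ hh hpencil hkey ih

end IsPictureExponent

end EnumerationExponents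

section DeterminantExpansion

lemma det_transpose_mul_eq_sum {J R A : Type*} [CommRing A] [Fintype J] [DecidableEq J]
    [Fintype R] (P Q : Matrix R J A) :
    (Pᵀ * Q).det = ∑ p : (J ↪ R) × Equiv.Perm J,
      Equiv.Perm.sign p.2 * ∏ x, P (p.1 (p.2 x)) x * Q (p.1 x) x := by
  classical
  have hexpand : (Pᵀ * Q).det = ∑ g : J → R, (P.submatrix g id)ᵀ.det * ∏ x, Q (g x) x := by
    simp only [det_apply', mul_apply, transpose_apply, submatrix_apply, id, Finset.prod_univ_sum,
      Fintype.piFinset_univ, Finset.prod_mul_distrib, Finset.mul_sum, Finset.sum_mul, mul_assoc]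
    exact Finset.sum_comm
  rw [hexpand, Fintype.sum_prod_type]
  symm
  refine Fintype.sum_of_injective _ DFunLike.coe_injective _ _ (fun g hg ↦ ?_) fun g ↦ ?_
  · obtain ⟨x, y, hxy, hne⟩ := Function.not_injective_iff.1
      fun hinj ↦ hg ⟨⟨g, hinj⟩, rfl⟩
    rw [det_transpose, det_zero_of_row_eq hne (by ext; simp [hxy]), zero_mul]
  · rw [det_transpose]
    simp only [det_apply', submatrix_apply, id, Finset.prod_mul_distrib,
      Finset.sum_mul, mul_assoc]

end DeterminantExpansion

section PencilExpansion

variable {r n d D : ℕ}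

/-- The `r`-tuple of generic `n × n` matrices. -/
noncomputable def genericTuple (K : Type*) [CommSemiring K] (r n : ℕ) (i : Fin r) :
    Matrix (Fin n) (Fin n) (MvPolynomial (Fin r × Fin n × Fin n) K) :=
  of fun c c' ↦ X (i, c, c')

/-- The two factors of the pencil of the split generic tuple: the row with index `(k, s)` is the
tensor product of row `s` of the factor `b` of the tuple with the `k`-th auxiliary vector. -/
noncomputable def pencilFactor (K : Type*) [CommSemiring K] (r n d D : ℕ) (b : Bool) :
    Matrix (Fin D × Fin (r * n)) (Fin d × Fin n)
      (MvPolynomial (PencilVar r D d) (MvPolynomial (SplitVar r n) K)) :=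
  of fun q x ↦ X (b, (q.2.divNat, q.1), x.1) * C (X (b, q.2, x.2))

variable {K : Type} [Field K]

lemma pencil_splitSubst_genericTuple :
    pencil D d (fun i ↦ (genericTuple K r n i).map (splitSubst K r n)) =
      (pencilFactor K r n d D false)ᵀ * pencilFactor K r n d D true := by
  ext1 x y
  simp only [pencil_apply, genericTuple, map_apply, of_apply, splitSubst, aeval_X,
    mul_apply, transpose_apply, pencilFactor, Fintype.sum_prod_type_right, map_sum, Finset.mul_sum]
  rw [Finset.sum_comm_cycle]
  refine Finset.sum_congr rfl fun s _ ↦ Finset.sum_congr rfl fun k _ ↦ ?_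
  rw [Finset.sum_eq_single_of_mem s.divNat (Finset.mem_univ _) fun i _ hi ↦ ?_, if_pos rfl, C_mul]
  · ring
  · rw [if_neg hi.symm, C_0, mul_zero]

lemma prod_pencilFactor (h : Bool → Fin d × Fin n → Fin D × Fin (r * n)) :
    ∏ b, ∏ x, pencilFactor K r n d D b (h b x) x =
      monomial (pencilExponent h) (monomial (splitExponent h) 1) := by
  rw [← mul_one (monomial (splitExponent h) (1 : K)), ← C_mul_monomial, mul_comm]
  simp only [pencilFactor, of_apply, Finset.prod_mul_distrib, pencilExponent, splitExponent,
    monomial_sum_one, map_prod, X]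

/-- The pair of maps from positions to cells that belongs to a term of the determinant expansion. -/
def expansionPair {J R : Type*} (p : (J ↪ R) × Equiv.Perm J) : Bool → J → R
  | false => p.1 ∘ p.2
  | true => p.1

lemma expansionPair_injective {J R : Type*} :
    Function.Injective (expansionPair (J := J) (R := R)) := by
  rintro ⟨g, σ⟩ ⟨g', σ'⟩ h
  obtain rfl : g = g' := DFunLike.coe_injective (congrFun h true)
  have hσ : g ∘ σ = g ∘ σ' := congrFun h false
  exact Prod.ext rfl (DFunLike.coe_injective (g.injective.comp_left hσ))

lemma coeff_splitSubst_pencilDetCoeff (β : PencilVar r D d →₀ ℕ) (e : SplitVar r n →₀ ℕ) :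
    (splitSubst K r n (pencilDetCoeff D d β (genericTuple K r n))).coeff e =
      ∑ p, if pencilExponent (expansionPair p) = β ∧ splitExponent (expansionPair p) = e then
        ((Equiv.Perm.sign p.2 : ℤ) : K) else 0 := by
  have hmap := map_pencilDetCoeff (splitSubst K r n).toRingHom β (genericTuple K r n)
  simp only [AlgHom.toRingHom_eq_coe, RingHom.coe_coe] at hmap
  rw [hmap, pencilDetCoeff, pencil_splitSubst_genericTuple, det_transpose_mul_eq_sum, coeff_sum,
    coeff_sum]
  refine Finset.sum_congr rfl fun p _ ↦ ?_
  have hprod := prod_pencilFactor (K := K) (expansionPair p)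
  rw [Fintype.prod_bool, mul_comm, ← Finset.prod_mul_distrib] at hprod
  simp only [expansionPair, Function.comp_apply] at hprod
  have hsign : ((Equiv.Perm.sign p.2 : ℤ) : MvPolynomial (PencilVar r D d)
      (MvPolynomial (SplitVar r n) K)) = C (C ((Equiv.Perm.sign p.2 : ℤ) : K)) := by
    rw [map_intCast, map_intCast]
  rw [hprod, hsign, C_mul_monomial, C_mul_monomial, mul_one, coeff_monomial, ite_and]
  split_ifs with hpencil hsplit <;> simp [coeff_monomial, *]

theorem IsPictureExponent.exists_isLeadingExponent {e : SplitVar r n →₀ ℕ}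
    (he : IsPictureExponent d e) : ∃ β, IsLeadingExponent
      (splitSubst K r n (pencilDetCoeff (n * d) d β (genericTuple K r n))) e := by
  choose h₀ hh₀ using he.exists_isStandardEnumeration
  obtain ⟨σ₀, hσ₀⟩ := (hh₀ false).exists_perm ((hh₀ true).congr he.rowPrefix_eq)
  let p₀ : (Fin d × Fin n ↪ Fin (n * d) × Fin (r * n)) × Equiv.Perm (Fin d × Fin n) :=
    (⟨h₀ true, (hh₀ true).injective⟩, σ₀)
  have hp₀ : expansionPair p₀ = h₀ := by
    ext1 b
    cases b
    exacts [hσ₀.symm, rfl]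
  have huniq {p} (hpencil : pencilExponent (expansionPair p) = pencilExponent h₀)
      (hkey : monomialKey e ≤ monomialKey (splitExponent (expansionPair p))) : p = p₀ := by
    have hp : expansionPair p = expansionPair p₀ :=
      (he.eq_of_pencilExponent_eq hh₀ p.1.injective rfl hpencil hkey).trans hp₀.symm
    exact expansionPair_injective hp
  refine ⟨pencilExponent h₀, mem_support_iff.2 ?_, fun e' he' ↦ ?_⟩
  · rw [coeff_splitSubst_pencilDetCoeff, Finset.sum_eq_single p₀ (fun p _ hp ↦ if_neg ?_) (by simp),
      hp₀, if_pos ⟨rfl, splitExponent_eq hh₀⟩]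
    · rcases Int.units_eq_one_or (Equiv.Perm.sign p₀.2) with h | h <;> simp [h]
    · rintro ⟨hpencil, hsplit⟩
      exact hp (huniq hpencil (congrArg monomialKey hsplit.symm).le)
  · rw [mem_support_iff, coeff_splitSubst_pencilDetCoeff] at he'
    obtain ⟨p, -, hp⟩ := Finset.exists_ne_zero_of_sum_ne_zero he'
    obtain ⟨⟨hpencil, rfl⟩, -⟩ := ite_ne_right_iff.1 hp
    refine le_of_not_gt fun hlt ↦ hlt.ne ?_
    rw [huniq hpencil hlt.le, hp₀, splitExponent_eq hh₀]

end PencilExpansion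

section Span

variable {r n d D : ℕ} {K : Type} [Field K]

lemma IsLeadingExponent.exists_forall_mem_support_sub_smul_lt {e : SplitVar r n →₀ ℕ}
    {G H : MvPolynomial (SplitVar r n) K} (hG : IsLeadingExponent G e)
    (hH : IsLeadingExponent H e) :
    ∃ c : K, ∀ e' ∈ (G - c • H).support, monomialKey e' < monomialKey e := by
  classical
  refine ⟨coeff e G / coeff e H, fun e' he' ↦ lt_of_le_of_ne ?_ fun heq ↦ ?_⟩
  · rcases Finset.mem_union.1 (support_sub _ _ _ he') with h | h
    · exact hG.2 e' h
    · exact hH.2 e' (support_smul h)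
  · rw [monomialKey_injective heq, mem_support_iff, coeff_sub, coeff_smul, smul_eq_mul,
      div_mul_cancel₀ _ (mem_support_iff.1 hH.1), sub_self] at he'
    exact he' rfl

theorem le_of_forall_isLeadingExponent {U V : Submodule K (MvPolynomial (SplitVar r n) K)}
    {W : Set (SplitVar r n →₀ ℕ)} (hW : W.Finite) (hV : ∀ G ∈ V, (G.support : Set _) ⊆ W)
    (hUV : U ≤ V)
    (hU : ∀ G ∈ V, ∀ e, IsLeadingExponent G e → ∃ H ∈ U, IsLeadingExponent H e) : V ≤ U := by
  by_contra hle
  obtain ⟨G₀, hG₀, hG₀U⟩ := SetLike.not_le_iff_exists.1 hle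
  have hleading {G} (hG : G ∈ V) (hGU : G ∉ U) : ∃ e ∈ W, IsLeadingExponent G e := by
    obtain ⟨e, he⟩ := exists_isLeadingExponent (ne_of_mem_of_not_mem U.zero_mem hGU).symm
    exact ⟨e, hV G hG he.1, he⟩
  obtain ⟨e₀, he₀W, he₀⟩ := hleading hG₀ hG₀U
  obtain ⟨e, ⟨-, G, hG, hGU, he⟩, hmin⟩ := Set.exists_min_image
    {e | e ∈ W ∧ ∃ G ∈ V, G ∉ U ∧ IsLeadingExponent G e} monomialKey
    (hW.subset fun _ h ↦ h.1) ⟨e₀, he₀W, G₀, hG₀, hG₀U, he₀⟩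
  obtain ⟨H, hH, heH⟩ := hU G hG e he
  obtain ⟨c, hc⟩ := he.exists_forall_mem_support_sub_smul_lt heH
  have hcH : c • H ∈ U := U.smul_mem c hH
  have hsub : G - c • H ∈ V := V.sub_mem hG (hUV hcH)
  have hsubU : G - c • H ∉ U := fun h ↦ hGU ((U.sub_mem_iff_left hcH).1 h)
  obtain ⟨e', he'W, he'⟩ := hleading hsub hsubU
  exact (hmin e' ⟨he'W, _, hsub, hsubU, he'⟩).not_gt (hc e' he'.1)

/-- The space of the functions that satisfy `IsSemiInvariant d`. -/
def semiInvariants (K : Type) [Field K] (r n d : ℕ) :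
    Submodule K (MvPolynomial (Fin r × Fin n × Fin n) K) where
  carrier := {F | IsSemiInvariant d F}
  zero_mem' _ _ _ _ _ := by rw [map_zero, map_zero, mul_zero]
  add_mem' hF hG A B hA hB X := by
    rw [map_add, map_add, hF A B hA hB X, hG A B hA hB X, mul_add]
  smul_mem' c F hF A B hA hB X := by
    rw [smul_eval, smul_eval, hF A B hA hB X, mul_left_comm]

lemma eval_pencilDetCoeff_genericTuple (β : PencilVar r D d →₀ ℕ)
    (X : Fin r → Matrix (Fin n) (Fin n) K) :
    eval (matCoords X) (pencilDetCoeff D d β (genericTuple K r n)) = pencilDetCoeff D d β X := by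
  rw [map_pencilDetCoeff]
  congr 1
  ext i c c'
  exact eval_X _

lemma isSemiInvariant_pencilDetCoeff (β : PencilVar r D d →₀ ℕ) :
    IsSemiInvariant d (pencilDetCoeff D d β (genericTuple K r n)) := by
  intro A B _ _ X
  rw [eval_pencilDetCoeff_genericTuple, eval_pencilDetCoeff_genericTuple, pencilDetCoeff_mul_mul,
    det_transpose]

theorem IsSemiInvariant.mem_span_pencilDetCoeff [Infinite K]
    {F : MvPolynomial (Fin r × Fin n × Fin n) K} (hF : IsSemiInvariant d F) :
    F ∈ Submodule.span K (Set.range fun β : PencilVar r (n * d) d →₀ ℕ ↦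
      pencilDetCoeff (n * d) d β (genericTuple K r n)) := by
  set U := Submodule.span K (Set.range fun β : PencilVar r (n * d) d →₀ ℕ ↦
      pencilDetCoeff (n * d) d β (genericTuple K r n))
  let φ := (splitSubst K r n).toLinearMap
  suffices (semiInvariants K r n d).map φ ≤ U.map φ from
    (Submodule.map_le_map_iff_of_injective splitSubst_injective _ _).1 this hF
  refine le_of_forall_isLeadingExponent (Set.finite_Iic (Finsupp.equivFunOnFinite.symm fun _ ↦ d))
    ?_ (Submodule.map_mono (Submodule.span_le.2 ?_)) ?_
  · rintro _ ⟨G, hG, rfl⟩ e he ⟨b, s, c⟩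
    rw [Finsupp.equivFunOnFinite_symm_apply_apply, ← sum_column_eq hG he b c]
    exact Finset.single_le_sum (f := fun s ↦ e (b, s, c)) (fun _ _ ↦ Nat.zero_le _)
      (Finset.mem_univ s)
  · rintro _ ⟨β, rfl⟩
    exact isSemiInvariant_pencilDetCoeff β
  · rintro _ ⟨G, hG, rfl⟩ e he
    obtain ⟨β, hβ⟩ := (he.isPictureExponent hG).exists_isLeadingExponent (K := K)
    exact ⟨_, Submodule.mem_map_of_mem (Submodule.subset_span ⟨β, rfl⟩), hβ⟩

end Span

section HomogeneousComponents

open scoped Polynomial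

variable {K A ι : Type*} [CommRing K] [CommRing A] [Algebra K A] {F : MvPolynomial ι K}

lemma aeval_mul_of_isHomogeneous {k : ℕ} (hF : F.IsHomogeneous k) (t : A) (p : ι → A) :
    aeval (fun i ↦ t * p i) F = t ^ k * aeval p F := by
  rw [F.as_sum, map_sum, map_sum, Finset.mul_sum]
  refine Finset.sum_congr rfl fun e he ↦ ?_
  rw [← hF (mem_support_iff.1 he), ← aeval_pow_mul_monomial]
  simp only [Pi.one_apply, pow_one]

lemma coeff_aeval_X_mul_C (v : ι → K) (F : MvPolynomial ι K) (k : ℕ) :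
    (aeval (fun i ↦ Polynomial.X * Polynomial.C (v i)) F).coeff k =
      eval v (homogeneousComponent k F) := by
  have haeval (j : ℕ) : aeval (fun i ↦ Polynomial.X * Polynomial.C (v i))
      (homogeneousComponent j F) =
        Polynomial.C (eval v (homogeneousComponent j F)) * Polynomial.X ^ j := by
    rw [aeval_mul_of_isHomogeneous (homogeneousComponent_isHomogeneous j F), mul_comm]
    congr 1
    exact (comp_aeval_apply v Polynomial.CAlgHom _).symm.trans (by rw [aeval_eq_eval]; rfl)
  conv_lhs => rw [← sum_homogeneousComponent F]
  simp only [map_sum, haeval, Polynomial.finsetSum_coeff, Polynomial.coeff_C_mul_X_pow]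
  rw [Finset.sum_ite_eq, ite_eq_left_iff, Finset.mem_range]
  intro hk
  rw [homogeneousComponent_eq_zero _ _ (by omega), map_zero]

lemma eval_homogeneousComponent_eq [IsDomain K] [Infinite K] {u v : ι → K}
    (h : ∀ t : K, eval (fun i ↦ t * u i) F = eval (fun i ↦ t * v i) F) (k : ℕ) :
    eval u (homogeneousComponent k F) = eval v (homogeneousComponent k F) := by
  rw [← coeff_aeval_X_mul_C, ← coeff_aeval_X_mul_C]
  congr 1
  refine Polynomial.funext fun t ↦ ?_
  simpa only [polynomial_eval_aeval, Polynomial.eval_mul, Polynomial.eval_X, Polynomial.eval_C]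
    using h t

end HomogeneousComponents

section MatrixInvariants

variable {K : Type} [Field K] {n m d : ℕ} {f : MvPolynomial (Fin m × Fin n × Fin n) K}

lemma mem_matrixInvariants_iff : f ∈ matrixInvariants K n m ↔
    ∀ (A : GL (Fin n) K) (Y : Fin m → Matrix (Fin n) (Fin n) K),
      eval (matCoords fun i ↦ A.val * Y i * A⁻¹.val) f = eval (matCoords Y) f := by
  simp only [matrixInvariants, Algebra.mem_iInf, AlgHom.mem_equalizer, aeval_eq_eval]

lemma smul_matCoords (t : K) (Y : Fin m → Matrix (Fin n) (Fin n) K) :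
    (fun p ↦ t * matCoords Y p) = matCoords fun i ↦ t • Y i :=
  rfl

lemma homogeneousComponent_mem_matrixInvariants [Infinite K] (hf : f ∈ matrixInvariants K n m)
    (k : ℕ) : homogeneousComponent k f ∈ matrixInvariants K n m := by
  refine mem_matrixInvariants_iff.2 fun A Y ↦ eval_homogeneousComponent_eq (fun t ↦ ?_) k
  simpa only [smul_matCoords, Matrix.mul_smul, Matrix.smul_mul]
    using mem_matrixInvariants_iff.1 hf A fun i ↦ t • Y i

/-- The substitution of the products of the adjugate of an additional generic matrix `X 0` with the
other ones. It turns the conjugation invariance of homogeneous functions into semi-invariance. -/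
noncomputable def homogenization (K : Type) [Field K] (m n : ℕ) :
    MvPolynomial (Fin m × Fin n × Fin n) K →ₐ[K] MvPolynomial (Fin (m + 1) × Fin n × Fin n) K :=
  aeval fun p ↦ ((genericTuple K (m + 1) n 0).adjugate * genericTuple K (m + 1) n p.1.succ)
    p.2.1 p.2.2

/-- The specialization of the additional generic matrix of `homogenization` to the identity. -/
noncomputable def dehomogenization (K : Type) [Field K] (m n : ℕ) :
    MvPolynomial (Fin (m + 1) × Fin n × Fin n) K →ₐ[K] MvPolynomial (Fin m × Fin n × Fin n) K :=
  aeval fun p ↦ (Fin.cons 1 (genericTuple K m n) : Fin (m + 1) → Matrix (Fin n) (Fin n) _)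
    p.1 p.2.1 p.2.2

lemma genericTuple_map_dehomogenization (i : Fin (m + 1)) :
    (genericTuple K (m + 1) n i).map (dehomogenization K m n) =
      (Fin.cons 1 (genericTuple K m n) : Fin (m + 1) → Matrix (Fin n) (Fin n) _) i := by
  ext1 c c'
  exact aeval_X _ _

lemma map_homogenization {A : Type*} [CommRing A] [Algebra K A]
    (φ : MvPolynomial (Fin (m + 1) × Fin n × Fin n) K →ₐ[K] A) :
    φ (homogenization K m n f) = aeval (fun p ↦ (((genericTuple K (m + 1) n 0).map φ).adjugate *
      (genericTuple K (m + 1) n p.1.succ).map φ) p.2.1 p.2.2) f := by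
  rw [homogenization, comp_aeval_apply]
  congr 2 with p
  have hmap := AlgHom.map_adjugate φ (genericTuple K (m + 1) n 0)
  rw [AlgHom.mapMatrix_apply, AlgHom.mapMatrix_apply] at hmap
  rw [← hmap, ← Matrix.map_mul, map_apply]

lemma eval_homogenization (Y : Fin (m + 1) → Matrix (Fin n) (Fin n) K) :
    eval (matCoords Y) (homogenization K m n f) =
      eval (matCoords fun i ↦ (Y 0).adjugate * Y i.succ) f := by
  have hY (i) : (genericTuple K (m + 1) n i).map (aeval (matCoords Y)) = Y i := by
    ext1 c c'
    exact aeval_X _ _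
  rw [← aeval_eq_eval, map_homogenization, aeval_eq_eval]
  simp only [hY]
  rfl

lemma dehomogenization_homogenization :
    dehomogenization K m n (homogenization K m n f) = f := by
  rw [map_homogenization]
  simp only [genericTuple_map_dehomogenization, Fin.cons_zero, Fin.cons_succ, adjugate_one,
    Matrix.one_mul]
  exact aeval_X_left_apply f

lemma adjugate_mul_transpose_mul_mul {N R : Type*} [Fintype N] [DecidableEq N] [CommRing R]
    (A : Matrix N N R) (B : (Matrix N N R)ˣ) (Y Z : Matrix N N R) :
    (Aᵀ * Y * B.val).adjugate * (Aᵀ * Z * B.val) =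
      (A.det * B.val.det) • (B⁻¹.val * (Y.adjugate * Z) * B.val) := by
  have hB : B.val.adjugate = B.val.det • B⁻¹.val := by
    rw [← mul_one B.val.adjugate, ← B.mul_inv, ← mul_assoc, adjugate_mul, Matrix.smul_mul, one_mul]
  calc (Aᵀ * Y * B.val).adjugate * (Aᵀ * Z * B.val)
      = B.val.adjugate * Y.adjugate * (Aᵀ.adjugate * Aᵀ) * Z * B.val := by
        simp only [adjugate_mul_distrib, mul_assoc]
    _ = (A.det * B.val.det) • (B⁻¹.val * (Y.adjugate * Z) * B.val) := by
        rw [adjugate_mul, hB, det_transpose]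
        simp only [Matrix.smul_mul, Matrix.mul_smul, smul_smul, mul_one, mul_assoc]

theorem isSemiInvariant_homogenization (hf : f ∈ matrixInvariants K n m)
    (hd : f.IsHomogeneous d) : IsSemiInvariant d (homogenization K m n f) := by
  intro A B _ hB Y
  let B' := GeneralLinearGroup.mkOfDetNeZero B hB
  have hconj := mem_matrixInvariants_iff.1 hf B'⁻¹ fun i ↦ (Y 0).adjugate * Y i.succ
  have hhom := aeval_mul_of_isHomogeneous hd (A.det * B.det)
    (matCoords fun i ↦ B'⁻¹.val * ((Y 0).adjugate * Y i.succ) * B)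
  rw [inv_inv] at hconj
  rw [aeval_eq_eval, smul_matCoords] at hhom
  rw [eval_homogenization, eval_homogenization, ← hconj]
  refine Eq.trans (congrArg (eval · f) (congrArg matCoords (funext fun i ↦ ?_))) hhom
  exact adjugate_mul_transpose_mul_mul A B' (Y 0) (Y i.succ)

end MatrixInvariants

section Generators

variable {K : Type} [Field K] {n m : ℕ}

/-- The characteristic coefficients of the nonempty words in the generic matrices. -/
def wordCharCoeffs (K : Type) [Field K] (n m : ℕ) : Set (MvPolynomial (Fin m × Fin n × Fin n) K) :=
  {f | ∃ w : List (Fin m), w ≠ [] ∧ ∃ s, f = (w.map (genericTuple K m n)).prod.charpoly.coeff s}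

lemma eval_charpoly_coeff_word (Y : Fin m → Matrix (Fin n) (Fin n) K) (w : List (Fin m)) (s : ℕ) :
    eval (matCoords Y) ((w.map (genericTuple K m n)).prod.charpoly.coeff s) =
      (w.map Y).prod.charpoly.coeff s := by
  have hY : (eval (matCoords Y)).mapMatrix ∘ genericTuple K m n = Y := by
    ext i c c'
    exact eval_X _
  rw [← Polynomial.coeff_map, ← charpoly_map, ← RingHom.mapMatrix_apply, map_list_prod,
    List.map_map, hY]

lemma prod_map_units_conj {ι M : Type*} [Monoid M] (A : Mˣ) (Y : ι → M) (w : List ι) :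
    (w.map fun i ↦ A.val * Y i * A⁻¹.val).prod = A.val * (w.map Y).prod * A⁻¹.val := by
  refine List.prod_hom_rel w (r := fun P Q ↦ P = A.val * Q * A⁻¹.val) (by simp) ?_
  rintro i _ Q rfl
  simp only [mul_assoc, Units.inv_mul_cancel_left]

theorem adjoin_wordCharCoeffs_le :
    Algebra.adjoin K (wordCharCoeffs K n m) ≤ matrixInvariants K n m := by
  refine Algebra.adjoin_le ?_
  rintro _ ⟨w, -, s, rfl⟩
  refine mem_matrixInvariants_iff.2 fun A Y ↦ ?_
  rw [eval_charpoly_coeff_word, eval_charpoly_coeff_word, prod_map_units_conj, coe_units_inv,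
    charpoly_units_conj]

lemma charpoly_coeff_mem_adjoin {W : Matrix (Fin n) (Fin n) (MvPolynomial _ K)}
    (hW : W ∈ Submonoid.closure (Set.range (genericTuple K m n))) (s : ℕ) :
    W.charpoly.coeff s ∈ Algebra.adjoin K (wordCharCoeffs K n m) := by
  obtain ⟨l, hl, rfl⟩ := Submonoid.exists_list_of_mem_closure hW
  obtain ⟨w, rfl⟩ : l ∈ Set.range (List.map (genericTuple K m n)) := by rwa [Set.range_list_map]
  by_cases hw : w = []
  · rw [hw, List.map_nil, List.prod_nil, charpoly_one, sub_eq_add_neg, ← Polynomial.C_1,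
      ← Polynomial.C_neg, Polynomial.coeff_X_add_C_pow]
    exact mul_mem (pow_mem (neg_mem (one_mem _)) _) (natCast_mem _ _)
  · exact Algebra.subset_adjoin ⟨w, hw, s, rfl⟩

lemma dehomogenization_pencilDetCoeff_mem_adjoin {D d : ℕ} (β : PencilVar (m + 1) D d →₀ ℕ) :
    dehomogenization K m n (pencilDetCoeff D d β (genericTuple K (m + 1) n)) ∈
      Algebra.adjoin K (wordCharCoeffs K n m) := by
  have hmap := map_pencilDetCoeff (dehomogenization K m n).toRingHom β (genericTuple K (m + 1) n)
  simp only [AlgHom.toRingHom_eq_coe, RingHom.coe_coe, genericTuple_map_dehomogenization] at hmap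
  rw [hmap]
  refine pencilDetCoeff_mem (S := (Algebra.adjoin K (wordCharCoeffs K n m)).toSubring) (fun W hW ↦
    charpolyRev_coeff_mem_of_charpoly_coeff_mem fun s ↦ charpoly_coeff_mem_adjoin ?_ s) β
  rwa [Fin.range_cons, Submonoid.closure_insert_one] at hW

theorem mem_adjoin_wordCharCoeffs_of_isHomogeneous [Infinite K] {d : ℕ}
    {f : MvPolynomial (Fin m × Fin n × Fin n) K} (hf : f ∈ matrixInvariants K n m)
    (hd : f.IsHomogeneous d) : f ∈ Algebra.adjoin K (wordCharCoeffs K n m) := by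
  have hspan := (isSemiInvariant_homogenization hf hd).mem_span_pencilDetCoeff
  rw [← dehomogenization_homogenization (f := f)]
  suffices Submodule.span K _ ≤ (Algebra.adjoin K (wordCharCoeffs K n m)).toSubmodule.comap
      (dehomogenization K m n).toLinearMap from this hspan
  rw [Submodule.span_le]
  rintro _ ⟨β, rfl⟩
  exact dehomogenization_pencilDetCoeff_mem_adjoin β

end Generators

theorem stmt_19_general (K : Type) [Field K] [Infinite K] (n m : ℕ) :
    Algebra.adjoin K (wordCharCoeffs K n m) = matrixInvariants K n m := by
  refine le_antisymm adjoin_wordCharCoeffs_le fun f hf ↦ ?_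
  rw [← sum_homogeneousComponent f]
  exact sum_mem fun d _ ↦ mem_adjoin_wordCharCoeffs_of_isHomogeneous
    (homogeneousComponent_mem_matrixInvariants hf d) (homogeneousComponent_isHomogeneous d f)

/-- **Donkin.** In arbitrary characteristic, `S(n,m)` is generated as a
`K`-algebra by the characteristic coefficients `σ_s(X_{i_1} ⋯ X_{i_k})` of products of the
generic matrices, where `det(t • 1 - A) = ∑ j, σ_j(A) t^j`. -/
theorem stmt_19 (K : Type) [Field K] [IsAlgClosed K] (n m : ℕ) (hn : 0 < n) (hm : 0 < m) :
    Algebra.adjoin K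
        {f : MvPolynomial (Fin m × Fin n × Fin n) K |
          ∃ w : List (Fin m), w ≠ [] ∧ ∃ s : ℕ,
            f = ((w.map fun i => Matrix.of
                  fun j k : Fin n => (X (i, j, k) : MvPolynomial (Fin m × Fin n × Fin n) K)).prod.charpoly).coeff s}
      = matrixInvariants K n m := by
  have : Infinite K := IsAlgClosed.instInfinite
  exact stmt_19_general K n m
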